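/- arXiv:1602.08643 — 3 statements merged into one kernel-verified Lean document; each statement's English description precedes it below -/
import Mathlib

section
/- There exist a constant C > 0 and an integer N₀ such that for all N ≥ N₀ the maximizers σ₀ and σ_P^N satisfy |σ_P^N − σ₀| ≤ C/N. -/
/-!
Write `E_σ` for the expectation under the probability density proportional to
`exp (-f y + σ y)`, so that `Psi f σ = E_σ[y]`. No differentiation in `σ` is needed.

* `integral_tilt_mono`: for `g` continuous and nondecreasing, `σ ↦ E_σ[g]` is nondecreasing,
  because passing from `σ` to a larger parameter multiplies the density by an increasing function.
* `integral_deriv_tilt`: integration by parts gives `E_σ[f'] = σ`.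
* `Psi_strong_mono`: if `f'' ≤ κ₂`, then `κ₂ y - f'(y)` is nondecreasing, and the two facts above
  give `σ - τ ≤ κ₂ (Psi f σ - Psi f τ)` for `τ ≤ σ`.

Write `G = Psi ψ` and `H = Psi (ψ + P)`. Subtracting `A = G σ₀` from the equation for
`s = σP N` gives
`(1 - 1/N) (G s - G σ₀) + (1/N) (H s - H σ₀) = -(1/N) (H σ₀ - G σ₀)`.
Both terms on the left have the sign of `s - σ₀`, and for `N ≥ 2` the first has size at least
`|s - σ₀| / (2 κ₂)`, so `|s - σ₀| ≤ 2 κ₂ |H σ₀ - G σ₀| / N`.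
-/

noncomputable section

open MeasureTheory Real

/-- `Ψ(σ) = (∫ y exp(-f(y)+σy) dy) / (∫ exp(-f(y)+σy) dy)`. -/
def Psi (f : ℝ → ℝ) (σ : ℝ) : ℝ :=
  (∫ y : ℝ, y * Real.exp (-f y + σ * y)) / (∫ y : ℝ, Real.exp (-f y + σ * y))

theorem deriv_sub_mul_mono {f : ℝ → ℝ} (hf : ContDiff ℝ 2 f) {κ : ℝ}
    (h : ∀ y, κ ≤ deriv (deriv f) y) : Monotone fun y => deriv f y - κ * y := by
  have hd : Differentiable ℝ (deriv f) :=
    ((contDiff_succ_iff_deriv (n := 1)).1 hf).2.2.differentiable (by norm_num)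
  have hder : ∀ y, HasDerivAt (fun y => deriv f y - κ * y) (deriv (deriv f) y - κ) y := fun y => by
    simpa using (hd y).hasDerivAt.fun_sub ((hasDerivAt_id y).const_mul κ)
  refine monotone_of_deriv_nonneg (fun y => (hder y).differentiableAt) fun y => ?_
  rw [(hder y).deriv]
  linarith [h y]

theorem quadratic_lower_bound {f : ℝ → ℝ} (hf : ContDiff ℝ 2 f) {κ : ℝ}
    (h : ∀ y, κ ≤ deriv (deriv f) y) (y : ℝ) :
    f 0 + deriv f 0 * y + κ / 2 * y ^ 2 ≤ f y := by
  have hm := deriv_sub_mul_mono hf h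
  have hd : Differentiable ℝ f := hf.differentiable (by norm_num)
  have hder : ∀ y, HasDerivAt (fun y => f y - deriv f 0 * y - κ / 2 * y ^ 2)
      (deriv f y - deriv f 0 - κ * y) y := fun y => by
    have := ((hd y).hasDerivAt.fun_sub ((hasDerivAt_id' y).const_mul (deriv f 0))).fun_sub
      ((hasDerivAt_pow 2 y).const_mul (κ / 2))
    refine this.congr_deriv ?_
    norm_num
    ring
  have hc : Continuous fun y => f y - deriv f 0 * y - κ / 2 * y ^ 2 :=
    continuous_iff_continuousAt.2 fun y => (hder y).continuousAt
  rcases le_total 0 y with hy | hy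
  · have := monotoneOn_of_deriv_nonneg (convex_Ici (0 : ℝ)) hc.continuousOn
      (fun x _ => (hder x).differentiableAt.differentiableWithinAt) (fun x hx => by
        rw [interior_Ici] at hx
        rw [(hder x).deriv]
        have := hm (le_of_lt hx)
        simp only at this
        linarith)
    have := this Set.self_mem_Ici hy hy
    simp only at this
    linarith
  · have := antitoneOn_of_deriv_nonpos (convex_Iic (0 : ℝ)) hc.continuousOn
      (fun x _ => (hder x).differentiableAt.differentiableWithinAt) (fun x hx => by
        rw [interior_Iic] at hx
        rw [(hder x).deriv]
        have := hm (le_of_lt hx)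
        simp only at this
        linarith)
    have := this hy Set.self_mem_Iic hy
    simp only at this
    linarith

/-- The tilted density has Gaussian tails. -/
theorem exp_tilt_le {f : ℝ → ℝ} (hf : ContDiff ℝ 2 f) {κ : ℝ} (hκ : 0 < κ)
    (h : ∀ y, κ ≤ deriv (deriv f) y) (σ : ℝ) :
    ∃ K : ℝ, ∀ y, Real.exp (-f y + σ * y) ≤ K * Real.exp (-(κ / 4) * y ^ 2) := by
  refine ⟨Real.exp (-f 0 + (σ - deriv f 0) ^ 2 / κ), fun y => ?_⟩
  rw [← Real.exp_add, Real.exp_le_exp]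
  have h1 := quadratic_lower_bound hf h y
  -- Young's inequality absorbs the linear term into half of the quadratic one.
  have h2 : (σ - deriv f 0) * y ≤ (σ - deriv f 0) ^ 2 / κ + κ / 4 * y ^ 2 := by
    have h3 : 0 ≤ (σ - deriv f 0 - κ / 2 * y) ^ 2 / κ := by positivity
    have h4 : (σ - deriv f 0 - κ / 2 * y) ^ 2 / κ
        = (σ - deriv f 0) ^ 2 / κ + κ / 4 * y ^ 2 - (σ - deriv f 0) * y := by
      field_simp
      ring
    linarith
  nlinarith

theorem integrable_tilt {f g : ℝ → ℝ} (hf : ContDiff ℝ 2 f) {κ : ℝ} (hκ : 0 < κ)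
    (h : ∀ y, κ ≤ deriv (deriv f) y) (hg : Continuous g) {a b : ℝ}
    (hgb : ∀ y, |g y| ≤ a + b * |y|) (σ : ℝ) :
    Integrable fun y => g y * Real.exp (-f y + σ * y) := by
  obtain ⟨K, hK⟩ := exp_tilt_le hf hκ h σ
  have hκ4 : 0 < κ / 4 := by positivity
  have i1 : Integrable fun y : ℝ => Real.exp (-(κ / 4) * y ^ 2) := integrable_exp_neg_mul_sq hκ4
  have i2 : Integrable fun y : ℝ => |y * Real.exp (-(κ / 4) * y ^ 2)| :=
    (integrable_mul_exp_neg_mul_sq hκ4).abs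
  have hfc := hf.continuous
  refine ((i1.const_mul (K * a)).add (i2.const_mul (K * b))).mono'
    (by fun_prop : Continuous fun y => g y * Real.exp (-f y + σ * y)).aestronglyMeasurable
    (Filter.Eventually.of_forall fun y => ?_)
  rw [Real.norm_eq_abs, abs_mul, Real.abs_exp]
  calc |g y| * Real.exp (-f y + σ * y)
      ≤ (a + b * |y|) * (K * Real.exp (-(κ / 4) * y ^ 2)) :=
        mul_le_mul (hgb y) (hK y) (Real.exp_pos _).le ((abs_nonneg _).trans (hgb y))
    _ = _ := by
        simp only [Pi.add_apply, abs_mul, Real.abs_exp]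
        ring

theorem integrable_exp_tilt {f : ℝ → ℝ} (hf : ContDiff ℝ 2 f) {κ : ℝ} (hκ : 0 < κ)
    (h : ∀ y, κ ≤ deriv (deriv f) y) (σ : ℝ) :
    Integrable fun y => Real.exp (-f y + σ * y) := by
  simpa using integrable_tilt (g := fun _ => 1) hf hκ h continuous_const (a := 1) (b := 0)
    (by simp) σ

theorem integral_exp_tilt_pos {f : ℝ → ℝ} (hf : ContDiff ℝ 2 f) {κ : ℝ} (hκ : 0 < κ)
    (h : ∀ y, κ ≤ deriv (deriv f) y) (σ : ℝ) :
    0 < ∫ y, Real.exp (-f y + σ * y) :=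
  integral_exp_pos (integrable_exp_tilt hf hκ h σ)

/-- A continuous function with vanishing integral against a positive weight has a zero. -/
theorem exists_zero_of_integral_mul_eq_zero {g w : ℝ → ℝ} (hg : Continuous g)
    (hw : ∀ y, 0 < w y) (hi : Integrable fun y => g y * w y) (h0 : ∫ y, g y * w y = 0) :
    ∃ t, g t = 0 := by
  have key : ∀ k : ℝ → ℝ, (Integrable fun y => k y * w y) → ∫ y, k y * w y = 0 →
      ∃ a, k a ≤ 0 := by
    intro k hk hk0
    by_contra! hpos
    have hp : ∀ y, 0 < k y * w y := fun y => mul_pos (hpos y) (hw y)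
    have := (integral_pos_iff_support_of_nonneg (fun y => (hp y).le) hk).2 (by
      rw [Function.support_eq_univ fun y => (hp y).ne']
      simp)
    linarith
  obtain ⟨a, ha⟩ := key g hi h0
  obtain ⟨b, hb⟩ := key (fun y => -g y) (by simpa using hi.neg)
    (by simpa [integral_neg] using h0)
  exact mem_range_of_exists_le_of_exists_ge hg ⟨a, ha⟩ ⟨b, by linarith⟩

/-- Tilted expectations of a nondecreasing observable are nondecreasing in the tilt. -/
theorem integral_tilt_mono {f g : ℝ → ℝ} (hf : ContDiff ℝ 2 f) {κ : ℝ} (hκ : 0 < κ)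
    (h : ∀ y, κ ≤ deriv (deriv f) y) (hg : Continuous g) (hgm : Monotone g) {a b : ℝ}
    (hgb : ∀ y, |g y| ≤ a + b * |y|) {τ σ : ℝ} (hτσ : τ ≤ σ) :
    (∫ y, g y * Real.exp (-f y + τ * y)) / (∫ y, Real.exp (-f y + τ * y)) ≤
      (∫ y, g y * Real.exp (-f y + σ * y)) / (∫ y, Real.exp (-f y + σ * y)) := by
  set m := (∫ y, g y * Real.exp (-f y + τ * y)) / (∫ y, Real.exp (-f y + τ * y)) with hm
  have zτ := integral_exp_tilt_pos hf hκ h τ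
  have zσ := integral_exp_tilt_pos hf hκ h σ
  have hc : ∀ s, Integrable fun y => (g y - m) * Real.exp (-f y + s * y) := fun s => by
    simp only [sub_mul]
    exact (integrable_tilt hf hκ h hg hgb s).sub ((integrable_exp_tilt hf hκ h s).const_mul m)
  have hsplit : ∀ s, ∫ y, (g y - m) * Real.exp (-f y + s * y) =
      (∫ y, g y * Real.exp (-f y + s * y)) - m * ∫ y, Real.exp (-f y + s * y) := fun s => by
    simp only [sub_mul]
    rw [integral_sub (integrable_tilt hf hκ h hg hgb s)
      ((integrable_exp_tilt hf hκ h s).const_mul m), integral_const_mul]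
  have h0 : ∫ y, (g y - m) * Real.exp (-f y + τ * y) = 0 := by
    rw [hsplit, hm, div_mul_cancel₀ _ zτ.ne', sub_self]
  obtain ⟨t, ht⟩ := exists_zero_of_integral_mul_eq_zero
    (by fun_prop : Continuous fun y => g y - m)
    (fun y => Real.exp_pos _) (hc τ) h0
  -- `g - m` and `exp ((σ - τ) y) - exp ((σ - τ) t)` both change sign from `-` to `+` at `t`.
  have hle : ∀ y, Real.exp ((σ - τ) * t) * ((g y - m) * Real.exp (-f y + τ * y)) ≤
      (g y - m) * Real.exp (-f y + σ * y) := fun y => by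
    have e : Real.exp (-f y + σ * y) = Real.exp ((σ - τ) * y) * Real.exp (-f y + τ * y) := by
      rw [← Real.exp_add]
      ring_nf
    have hp : 0 ≤ (g y - m) * (Real.exp ((σ - τ) * y) - Real.exp ((σ - τ) * t)) := by
      rcases le_total t y with hy | hy
      · have h1 := hgm hy
        exact mul_nonneg (by linarith) (sub_nonneg.2 (Real.exp_le_exp.2
          (mul_le_mul_of_nonneg_left hy (by linarith))))
      · have h1 := hgm hy
        exact mul_nonneg_of_nonpos_of_nonpos (by linarith) (sub_nonpos.2 (Real.exp_le_exp.2
          (mul_le_mul_of_nonneg_left hy (by linarith))))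
    rw [e]
    nlinarith [mul_nonneg hp (Real.exp_pos (-f y + τ * y)).le]
  have hint := integral_mono ((hc τ).const_mul _) (hc σ) hle
  rw [integral_const_mul, h0, mul_zero, hsplit] at hint
  rw [le_div_iff₀ zσ]
  linarith

theorem abs_deriv_le {f : ℝ → ℝ} (hf : ContDiff ℝ 2 f) {κ₁ κ₂ : ℝ} (hκ : 0 < κ₁)
    (h : ∀ y, κ₁ ≤ deriv (deriv f) y ∧ deriv (deriv f) y ≤ κ₂) (y : ℝ) :
    |deriv f y| ≤ |deriv f 0| + κ₂ * |y| := by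
  have hd : Differentiable ℝ (deriv f) :=
    ((contDiff_succ_iff_deriv (n := 1)).1 hf).2.2.differentiable (by norm_num)
  have := Convex.norm_image_sub_le_of_norm_deriv_le (f := deriv f) (C := κ₂)
    (fun x _ => hd x) (fun x _ => by
      rw [Real.norm_eq_abs, abs_of_pos (hκ.trans_le (h x).1)]
      exact (h x).2) convex_univ (Set.mem_univ 0) (Set.mem_univ y)
  simp only [Real.norm_eq_abs, sub_zero] at this
  linarith [abs_sub_abs_le_abs_sub (deriv f y) (deriv f 0)]

/-- Integration by parts: the tilted expectation of `f'` is the tilt parameter. -/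
theorem integral_deriv_tilt {f : ℝ → ℝ} (hf : ContDiff ℝ 2 f) {κ₁ κ₂ : ℝ} (hκ : 0 < κ₁)
    (h : ∀ y, κ₁ ≤ deriv (deriv f) y ∧ deriv (deriv f) y ≤ κ₂) (σ : ℝ) :
    ∫ y, deriv f y * Real.exp (-f y + σ * y) = σ * ∫ y, Real.exp (-f y + σ * y) := by
  have hd : Differentiable ℝ f := hf.differentiable (by norm_num)
  have i0 := integrable_exp_tilt hf hκ (fun y => (h y).1) σ
  have i1 := integrable_tilt hf hκ (fun y => (h y).1) (hf.continuous_deriv (by norm_num))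
    (abs_deriv_le hf hκ h) σ
  have hder : ∀ y, HasDerivAt (fun y => Real.exp (-f y + σ * y))
      (σ * Real.exp (-f y + σ * y) - deriv f y * Real.exp (-f y + σ * y)) y := fun y => by
    have := ((hd y).hasDerivAt.fun_neg.fun_add ((hasDerivAt_id' y).const_mul σ)).exp
    convert this using 1
    ring
  have := integral_eq_zero_of_hasDerivAt_of_integrable hder ((i0.const_mul σ).sub i1) i0
  rw [integral_sub (i0.const_mul σ) i1, integral_const_mul] at this
  linarith

theorem Psi_mono {f : ℝ → ℝ} (hf : ContDiff ℝ 2 f) {κ : ℝ} (hκ : 0 < κ)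
    (h : ∀ y, κ ≤ deriv (deriv f) y) : Monotone (Psi f) := fun _ _ hτσ =>
  integral_tilt_mono hf hκ h continuous_id monotone_id (a := 0) (b := 1) (by simp) hτσ

/-- `Psi f` has slope at least `1 / κ₂`: apply monotonicity to `κ₂ y - f'(y)`. -/
theorem Psi_strong_mono {f : ℝ → ℝ} (hf : ContDiff ℝ 2 f) {κ₁ κ₂ : ℝ} (hκ : 0 < κ₁)
    (h : ∀ y, κ₁ ≤ deriv (deriv f) y ∧ deriv (deriv f) y ≤ κ₂) {τ σ : ℝ} (hτσ : τ ≤ σ) :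
    σ - τ ≤ κ₂ * (Psi f σ - Psi f τ) := by
  have h1 : ∀ y, κ₁ ≤ deriv (deriv f) y := fun y => (h y).1
  have hκ₂ : 0 < κ₂ := hκ.trans_le ((h 0).1.trans (h 0).2)
  have hcd : Continuous (deriv f) := hf.continuous_deriv (by norm_num)
  have hd : Differentiable ℝ (deriv f) :=
    ((contDiff_succ_iff_deriv (n := 1)).1 hf).2.2.differentiable (by norm_num)
  have hder : ∀ y, HasDerivAt (fun y => κ₂ * y - deriv f y) (κ₂ - deriv (deriv f) y) y :=
    fun y => by simpa using ((hasDerivAt_id y).const_mul κ₂).fun_sub (hd y).hasDerivAt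
  have hmono : Monotone fun y => κ₂ * y - deriv f y :=
    monotone_of_deriv_nonneg (fun y => (hder y).differentiableAt) fun y => by
      rw [(hder y).deriv]
      linarith [(h y).2]
  have hb : ∀ y, |κ₂ * y - deriv f y| ≤ |deriv f 0| + (2 * κ₂) * |y| := fun y => by
    have := abs_sub (κ₂ * y) (deriv f y)
    rw [abs_mul, abs_of_pos hκ₂] at this
    linarith [abs_deriv_le hf hκ h y]
  have hE : ∀ s, (∫ y, (κ₂ * y - deriv f y) * Real.exp (-f y + s * y)) /
      (∫ y, Real.exp (-f y + s * y)) = κ₂ * Psi f s - s := fun s => by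
    have z := integral_exp_tilt_pos hf hκ h1 s
    have i1 := integrable_tilt hf hκ h1 hcd (abs_deriv_le hf hκ h) s
    have i2 : Integrable fun y => y * Real.exp (-f y + s * y) :=
      integrable_tilt hf hκ h1 continuous_id (a := 0) (b := 1) (by simp) s
    simp only [sub_mul, mul_assoc]
    rw [integral_sub (i2.const_mul κ₂) i1, integral_const_mul, integral_deriv_tilt hf hκ h,
      sub_div, mul_div_assoc, mul_div_cancel_right₀ _ z.ne']
    rfl
  have := integral_tilt_mono hf hκ h1 (by fun_prop) hmono hb hτσ
  rw [hE, hE] at this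
  linarith

/-- `|σ_P^N - σ₀| ≤ C/N` for `N` large, where `σ₀` solves `A = Ψ(σ₀)` and
`σ_P^N` solves `A = Ψ(σ_P^N) + (1/N) Φ(σ_P^N)` with `Φ = Ψ_{ψ+P} - Ψ_ψ`. -/
theorem maximizer_closeness
    (ψ P : ℝ → ℝ) (κ₁ κ₂ ς₁ ς₂ : ℝ)
    (hψ : ContDiff ℝ 2 ψ) (hP : ContDiff ℝ 2 P)
    (hκ₁ : 0 < κ₁) (hκ : κ₁ ≤ κ₂) (hς₁ : 0 < ς₁) (hς : ς₁ ≤ ς₂)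
    (hψ'' : ∀ y : ℝ, κ₁ ≤ deriv (deriv ψ) y ∧ deriv (deriv ψ) y ≤ κ₂)
    (hψP'' : ∀ y : ℝ, ς₁ ≤ deriv (deriv (fun z => ψ z + P z)) y ∧
        deriv (deriv (fun z => ψ z + P z)) y ≤ ς₂)
    (A σ₀ : ℝ) (hσ₀ : A = Psi ψ σ₀)
    (σP : ℕ → ℝ)
    (hσP : ∀ N : ℕ, 2 ≤ N →
      A = Psi ψ (σP N) + (N : ℝ)⁻¹ * (Psi (fun z => ψ z + P z) (σP N) - Psi ψ (σP N))) :
    ∃ C > 0, ∃ N₀ : ℕ, ∀ N : ℕ, N₀ ≤ N → |σP N - σ₀| ≤ C / N := by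
  set H := Psi (fun z => ψ z + P z)
  have hG := fun {τ σ : ℝ} (hs : τ ≤ σ) => Psi_strong_mono hψ hκ₁ hψ'' hs
  have hH : Monotone H := Psi_mono (hψ.add hP) hς₁ fun y => (hψP'' y).1
  have hκ₂ : 0 < κ₂ := hκ₁.trans_le hκ
  refine ⟨2 * κ₂ * |H σ₀ - Psi ψ σ₀| + 1, by positivity, 2, fun N hN => ?_⟩
  have hN' : (2 : ℝ) ≤ N := by exact_mod_cast hN
  have hN0 : (0 : ℝ) < N := by linarith
  have e := hσP N hN
  set s := σP N
  rw [hσ₀] at e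
  have e' : (N - 1 : ℝ) * (Psi ψ s - Psi ψ σ₀) + (H s - H σ₀) = -(H σ₀ - Psi ψ σ₀) := by
    field_simp at e
    linarith
  rw [le_div_iff₀ hN0]
  -- `N - 1 ≥ N / 2` is where the factor `2` in the constant comes from.
  rcases le_total σ₀ s with hs | hs
  · have h1 := hG hs
    have h2 := hH hs
    have h3 : (N - 1 : ℝ) * (Psi ψ s - Psi ψ σ₀) ≤ |H σ₀ - Psi ψ σ₀| := by
      linarith [neg_abs_le (H σ₀ - Psi ψ σ₀)]
    rw [abs_of_nonneg (by linarith)]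
    have h4 := mul_le_mul_of_nonneg_left h1 (by linarith : (0 : ℝ) ≤ N - 1)
    have h5 := mul_le_mul_of_nonneg_left h3 hκ₂.le
    nlinarith [mul_nonneg (sub_nonneg.2 hN') (sub_nonneg.2 hs)]
  · have h1 := hG hs
    have h2 := hH hs
    have h3 : (N - 1 : ℝ) * (Psi ψ σ₀ - Psi ψ s) ≤ |H σ₀ - Psi ψ σ₀| := by
      linarith [le_abs_self (H σ₀ - Psi ψ σ₀)]
    rw [abs_of_nonpos (by linarith)]
    have h4 := mul_le_mul_of_nonneg_left h1 (by linarith : (0 : ℝ) ≤ N - 1)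
    have h5 := mul_le_mul_of_nonneg_left h3 hκ₂.le
    nlinarith [mul_nonneg (sub_nonneg.2 hN') (sub_nonneg.2 hs)]
end
end

section
/- There exist a constant C > 0 and an integer N₀ such that for all N ≥ N₀, | log( g^P_{N,A}(0) / g_{N,A}(0) ) | ≤ C/N. -/
/-!
The two densities at the origin are compared through Fourier inversion at a common tilt. Let `a`
and `b` be the characteristic functions of the Gibbs measures of `ψ` and `ψ + P` at the *same*
parameter `σ₀`, both recentred at `A`. Changing the tilt from `σP N` to `σ₀` multiplies the density
of the sum at its mean `N A` by an explicit factor `E_N` made of partition functions, so that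
(`density_at_zero`, `density_at_zero_two`)

  `gP N 0 = E_N (√N / (2 π)) Re ∫ b a^(N-1)`   and   `g N 0 = (√N / (2 π)) Re ∫ a^N`.

* The score `V' - σ` has finite second moment, and integration by parts with Cauchy–Schwarz gives
  `t² |a|² ≤ J (1 - |a|²)` (`exists_cf_decay`). Hence `|a|^(N-2)` is at most
  `(1 + c N t²)⁻³`, for all `t` at once.
* `Re ∫ (b - a) a^(N-1)` is `O(N^(-3/2))` (`exists_replace_bound`): the real part of `b - a` is
  `O(t²)`, its imaginary part is only `O(|t|)`, but it meets the imaginary part of `a^(N-1)`, which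
  is `O(N |t|³) |a|^(N-2)` because `a` is centred at the mean of its measure.
* `Re ∫ a^N ≥ c₀ / √N` for large `N`, by the central limit theorem and dominated convergence
  (`exists_lower_bound`).
* The logarithmic partition function `logZ` is strongly convex (`logZ_ge_sq`), so the one-site
  perturbation moves the maximizer by `O(1 / N)` (`tilt_bound`), and a second-order expansion of
  `logZ` shows `log E_N = O(1 / N)` (`log_prefactor_bound`).

The ratio is therefore `E_N (1 + O(1 / N))`. The densities are given only up to their values where
they are negative, which is why `max (G 0) 0` occurs in the inversion formula; its positivity for
large `N` identifies it with `G 0`.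
-/

noncomputable section

open MeasureTheory Real

/-- The one-dimensional Gibbs measure `Z⁻¹ exp(σ y - f y) dy`. -/
def gibbs (f : ℝ → ℝ) (σ : ℝ) : Measure ℝ :=
  volume.withDensity fun y =>
    ENNReal.ofReal ((∫ z : ℝ, Real.exp (σ * z - f z))⁻¹ * Real.exp (σ * y - f y))

/-- The mean of the Gibbs measure. -/
def gibbsMean (f : ℝ → ℝ) (σ : ℝ) : ℝ :=
  (∫ z : ℝ, z * Real.exp (σ * z - f z)) / (∫ z : ℝ, Real.exp (σ * z - f z))

/-! ### Uniformly convex potentials -/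

/-- A `C²` potential whose second derivative is bounded below by a positive constant. -/
structure UnifConvex (V : ℝ → ℝ) (κ : ℝ) : Prop where
  smooth : ContDiff ℝ 2 V
  pos : 0 < κ
  le_deriv2 : ∀ y, κ ≤ deriv (deriv V) y

lemma tangent_le {f : ℝ → ℝ} (hf : ContDiff ℝ 2 f) (h2 : ∀ y, 0 ≤ deriv (deriv f) y) (x y : ℝ) :
    f x + deriv f x * (y - x) ≤ f y := by
  have hd : Differentiable ℝ f := hf.differentiable (by norm_num)
  have hd' : Differentiable ℝ (deriv f) := by
    have := hf.differentiable_deriv_two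
    exact this
  have hc : ConvexOn ℝ Set.univ f := convexOn_univ_of_deriv2_nonneg hd hd' (fun x => h2 x)
  rcases lt_trichotomy x y with h | h | h
  · have := hc.deriv_le_slope (Set.mem_univ x) (Set.mem_univ y) h (hd x)
    rw [slope_def_field, le_div_iff₀ (by linarith)] at this
    linarith
  · subst h; simp
  · have := hc.slope_le_deriv (Set.mem_univ y) (Set.mem_univ x) h (hd x)
    rw [slope_def_field, div_le_iff₀ (by linarith)] at this
    linarith

/-- Second-order Taylor lower bound; no sign of `κ` is assumed. -/
lemma taylor_lower {f : ℝ → ℝ} {κ : ℝ} (hf : ContDiff ℝ 2 f) (h2 : ∀ y, κ ≤ deriv (deriv f) y)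
    (x y : ℝ) : f x + deriv f x * (y - x) + κ / 2 * (y - x) ^ 2 ≤ f y := by
  have hd : Differentiable ℝ f := hf.differentiable (by norm_num)
  have hd' : Differentiable ℝ (deriv f) := hf.differentiable_deriv_two
  have e1 : deriv (fun z => f z - κ / 2 * z ^ 2) = fun z => deriv f z - κ * z := by
    funext z
    have := ((hd z).hasDerivAt.sub (((hasDerivAt_id z).pow 2).const_mul (κ / 2))).deriv
    simp only [id] at this
    convert! this using 1
    simp; ring
  have e2 : ∀ z, deriv (deriv (fun z => f z - κ / 2 * z ^ 2)) z = deriv (deriv f) z - κ := by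
    intro z
    rw [e1]
    have := ((hd' z).hasDerivAt.sub ((hasDerivAt_id z).const_mul κ)).deriv
    simp only [id] at this
    convert! this using 1
    simp
  have := tangent_le (f := fun z => f z - κ / 2 * z ^ 2) (by fun_prop)
    (fun z => by rw [e2]; linarith [h2 z]) x y
  rw [e1] at this
  simp only at this
  nlinarith [this]

lemma taylor_upper {f : ℝ → ℝ} {κ : ℝ} (hf : ContDiff ℝ 2 f) (h2 : ∀ y, deriv (deriv f) y ≤ κ)
    (x y : ℝ) : f y ≤ f x + deriv f x * (y - x) + κ / 2 * (y - x) ^ 2 := by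
  have e : deriv (fun z => - f z) = fun z => - deriv f z := by
    funext z; exact deriv.fun_neg
  have e2 : ∀ z, deriv (fun z => - deriv f z) z = - deriv (deriv f) z := fun z => deriv.fun_neg
  have := taylor_lower (f := fun z => - f z) (κ := -κ) hf.neg
    (fun z => by rw [e, e2]; linarith [h2 z]) x y
  rw [e] at this
  simp only at this
  linarith

namespace UnifConvex

variable {V : ℝ → ℝ} {κ : ℝ}

lemma continuous (h : UnifConvex V κ) : Continuous V := h.smooth.continuous

lemma integrable_weight (h : UnifConvex V κ) (σ : ℝ) :
    Integrable (fun y => rexp (σ * y - V y)) := by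
  have hκ := h.pos
  have hc := h.continuous
  set c := σ - deriv V 0
  have hg : Integrable (fun y => rexp (-V 0 + c ^ 2 / κ) * rexp (-(κ / 4) * y ^ 2)) :=
    (integrable_exp_neg_mul_sq (by linarith)).const_mul _
  refine hg.mono' (by fun_prop) (Filter.Eventually.of_forall fun y => ?_)
  rw [Real.norm_of_nonneg (exp_pos _).le, ← Real.exp_add]
  apply Real.exp_le_exp.2
  have h1 := taylor_lower h.smooth h.le_deriv2 0 y
  simp only [sub_zero] at h1
  have h2 : c * y ≤ c ^ 2 / κ + κ / 4 * y ^ 2 := by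
    rw [div_add' _ _ _ hκ.ne', le_div_iff₀ hκ]
    nlinarith [sq_nonneg (c - κ / 2 * y)]
  have h3 : c * y = σ * y - deriv V 0 * y := by ring
  linarith

/-- The partition function is positive. -/
lemma Z_pos (h : UnifConvex V κ) (σ : ℝ) : 0 < ∫ y, rexp (σ * y - V y) :=
  integral_exp_pos (h.integrable_weight σ)

lemma integral_gibbs {E : Type*} [NormedAddCommGroup E] [NormedSpace ℝ E]
    (h : UnifConvex V κ) (σ : ℝ) (f : ℝ → E) :
    ∫ y, f y ∂(gibbs V σ) = (∫ y, rexp (σ * y - V y))⁻¹ • ∫ y, rexp (σ * y - V y) • f y := by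
  have hc := h.continuous
  rw [gibbs, integral_withDensity_eq_integral_toReal_smul (by fun_prop) (by simp),
    ← integral_smul]
  congr 1 with y
  rw [ENNReal.toReal_ofReal (mul_nonneg (inv_nonneg.2 (h.Z_pos σ).le) (exp_pos _).le), mul_smul]

lemma integrable_gibbs {E : Type*} [NormedAddCommGroup E] [NormedSpace ℝ E]
    (h : UnifConvex V κ) (σ : ℝ) (f : ℝ → E) :
    Integrable f (gibbs V σ) ↔ Integrable (fun y => rexp (σ * y - V y) • f y) := by
  have hc := h.continuous
  rw [gibbs, integrable_withDensity_iff_integrable_smul' (by fun_prop) (by simp)]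
  have : (fun y => (ENNReal.ofReal ((∫ z : ℝ, Real.exp (σ * z - V z))⁻¹ *
      Real.exp (σ * y - V y))).toReal • f y) =
      (∫ y, rexp (σ * y - V y))⁻¹ • fun y => rexp (σ * y - V y) • f y := by
    funext y
    rw [ENNReal.toReal_ofReal (mul_nonneg (inv_nonneg.2 (h.Z_pos σ).le) (exp_pos _).le), mul_smul]
    rfl
  rw [this]
  exact integrable_smul_iff (inv_ne_zero (h.Z_pos σ).ne') _

lemma isProb (h : UnifConvex V κ) (σ : ℝ) : IsProbabilityMeasure (gibbs V σ) := by
  have hc := h.continuous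
  constructor
  rw [gibbs, withDensity_apply _ MeasurableSet.univ, Measure.restrict_univ,
    ← ofReal_integral_eq_lintegral_ofReal ((h.integrable_weight σ).const_mul _)
      (Filter.Eventually.of_forall fun y =>
        mul_nonneg (inv_nonneg.2 (h.Z_pos σ).le) (exp_pos _).le),
    integral_const_mul, inv_mul_cancel₀ (h.Z_pos σ).ne', ENNReal.ofReal_one]

lemma integrable_exp (h : UnifConvex V κ) (σ t : ℝ) :
    Integrable (fun y => rexp (t * y)) (gibbs V σ) := by
  rw [h.integrable_gibbs]
  convert h.integrable_weight (σ + t) using 2 with y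
  rw [smul_eq_mul, ← Real.exp_add]; ring_nf

/-- Every centred polynomial moment is finite, also against an exponential weight. -/
lemma integrable_pow_mul_exp (h : UnifConvex V κ) (σ c t : ℝ) (n : ℕ) :
    Integrable (fun y => |y - c| ^ n * rexp (t * |y - c|)) (gibbs V σ) := by
  set s := 1 + |t|
  have hs : 0 < s := by positivity
  have key := (((h.integrable_exp σ s).add (h.integrable_exp σ (-s))).const_mul
    (n.factorial * rexp (s * |c|)))
  refine key.mono' (by fun_prop) (Filter.Eventually.of_forall fun y => ?_)
  rw [Real.norm_of_nonneg (by positivity)]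
  have h1 : |y - c| ^ n ≤ n.factorial * rexp |y - c| := by
    have := Real.pow_div_factorial_le_exp _ (abs_nonneg (y - c)) n
    rwa [div_le_iff₀' (by positivity)] at this
  have h2 : t * |y - c| ≤ |t| * |y - c| := by gcongr; exact le_abs_self t
  have h3 : |y - c| ≤ |y| + |c| := abs_sub y c
  calc |y - c| ^ n * rexp (t * |y - c|)
      ≤ (n.factorial * rexp |y - c|) * rexp (|t| * |y - c|) := by gcongr
    _ = n.factorial * rexp (s * |y - c|) := by
        rw [mul_assoc, ← Real.exp_add]; congr 2; simp only [s]; ring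
    _ ≤ n.factorial * rexp (s * (|y| + |c|)) := by gcongr
    _ = n.factorial * rexp (s * |c|) * rexp (s * |y|) := by
        rw [mul_assoc, ← Real.exp_add]; congr 2; ring
    _ ≤ _ := by
        refine mul_le_mul_of_nonneg_left ?_ (by positivity)
        rw [Pi.add_apply]
        rcases abs_cases y with ⟨h1, _⟩ | ⟨h1, _⟩ <;> rw [h1]
        · linarith [exp_pos (-s * y)]
        · have := exp_pos (s * y)
          rw [mul_neg, ← neg_mul]; linarith

lemma integrable_abs_pow (h : UnifConvex V κ) (σ c : ℝ) (n : ℕ) :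
    Integrable (fun y => |y - c| ^ n) (gibbs V σ) := by
  simpa using h.integrable_pow_mul_exp σ c 0 n

lemma integrable_sub (h : UnifConvex V κ) (σ c : ℝ) :
    Integrable (fun y : ℝ => y - c) (gibbs V σ) := by
  have := h.integrable_abs_pow σ c 1
  simp only [pow_one] at this
  exact this.mono' (by fun_prop) (Filter.Eventually.of_forall fun y => le_rfl)

lemma integrable_id (h : UnifConvex V κ) (σ : ℝ) : Integrable (fun y : ℝ => y) (gibbs V σ) := by
  simpa using h.integrable_sub σ 0

lemma gibbsMean_eq (h : UnifConvex V κ) (σ : ℝ) : gibbsMean V σ = ∫ y, y ∂(gibbs V σ) := by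
  rw [h.integral_gibbs, gibbsMean, div_eq_inv_mul, smul_eq_mul]
  congr 2 with y
  rw [smul_eq_mul, mul_comm]

end UnifConvex

/-! ### Characteristic functions of Gibbs measures -/

/-- The characteristic function of `μ` recentred at `c`, i.e. that of `Y - c` for `Y ∼ μ`. -/
def cf (μ : Measure ℝ) (c t : ℝ) : ℂ :=
  ∫ y, Complex.exp ((t * (y - c) : ℝ) * Complex.I) ∂μ

section cf

variable (μ : Measure ℝ) [IsProbabilityMeasure μ] (c : ℝ)

lemma integrable_cf (t : ℝ) :
    Integrable (fun y : ℝ => Complex.exp ((t * (y - c) : ℝ) * Complex.I)) μ :=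
  (integrable_const (1 : ℝ)).mono' (by fun_prop)
    (Filter.Eventually.of_forall fun y => (Complex.norm_exp_ofReal_mul_I _).le)

lemma norm_cf_le (t : ℝ) : ‖cf μ c t‖ ≤ 1 := by
  have := norm_integral_le_of_norm_le_const (μ := μ) (C := 1)
    (f := fun y : ℝ => Complex.exp ((t * (y - c) : ℝ) * Complex.I))
    (Filter.Eventually.of_forall fun y => (Complex.norm_exp_ofReal_mul_I _).le)
  simpa [cf] using this

lemma continuous_cf : Continuous (cf μ c) := by
  unfold cf
  refine continuous_of_dominated (bound := fun _ => 1) (fun t => by fun_prop)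
    (fun t => Filter.Eventually.of_forall fun y => (Complex.norm_exp_ofReal_mul_I _).le)
    (integrable_const _) (Filter.Eventually.of_forall fun y => by fun_prop)

lemma cf_re (t : ℝ) : (cf μ c t).re = ∫ y, cos (t * (y - c)) ∂μ := by
  rw [cf, ← RCLike.re_eq_complex_re, ← integral_re (integrable_cf μ c t)]
  congr 1 with y
  simp only [RCLike.re_eq_complex_re, Complex.exp_ofReal_mul_I_re]

lemma cf_im (t : ℝ) : (cf μ c t).im = ∫ y, sin (t * (y - c)) ∂μ := by
  rw [cf, ← RCLike.im_eq_complex_im, ← integral_im (integrable_cf μ c t)]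
  congr 1 with y
  simp only [RCLike.im_eq_complex_im, Complex.exp_ofReal_mul_I_im]

end cf

lemma abs_sin_sub_le (x : ℝ) : |sin x - x| ≤ |x| ^ 3 := by
  have key : ∀ y : ℝ, 0 ≤ y → |sin y - y| ≤ y ^ 3 := by
    intro y hy
    rcases le_or_gt y 1 with h | h
    · have h1 := Real.sin_le hy
      have h2 := Real.sin_bound (x := y) (by rw [abs_of_nonneg hy]; exact h)
      have h3 := (abs_le.1 h2).1
      rw [abs_of_nonneg hy] at h3
      rw [abs_le]; constructor
      · nlinarith [pow_nonneg hy 3, mul_le_mul_of_nonneg_left h (pow_nonneg hy 3)]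
      · linarith [pow_nonneg hy 3]
    · have h1 := Real.sin_le hy
      have h2 := Real.neg_one_le_sin y
      have h3 : 1 ≤ y ^ 2 := one_le_pow₀ h.le
      have h4 : y ≤ y ^ 3 := by nlinarith
      rw [abs_le]
      refine ⟨?_, by linarith⟩
      rcases le_or_gt y 3 with h' | h'
      · linarith [Real.sin_nonneg_of_nonneg_of_le_pi hy (by linarith [Real.pi_gt_three])]
      · nlinarith
  rcases le_or_gt 0 x with h | h
  · rw [abs_of_nonneg h]; exact key x h
  · have := key (-x) (by linarith)
    rw [abs_of_neg h, ← abs_neg]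
    convert this using 2
    rw [sin_neg]; ring

namespace UnifConvex

variable {V : ℝ → ℝ} {κ : ℝ}

lemma abs_cf_re_sub_one_le (h : UnifConvex V κ) (σ c t : ℝ) :
    |(cf (gibbs V σ) c t).re - 1| ≤ (∫ y, |y - c| ^ 2 ∂(gibbs V σ)) * t ^ 2 := by
  have := h.isProb σ
  have hi : Integrable (fun y => cos (t * (y - c))) (gibbs V σ) :=
    (integrable_const (1 : ℝ)).mono' (by fun_prop)
      (Filter.Eventually.of_forall fun y => abs_cos_le_one _)
  have e : (cf (gibbs V σ) c t).re - 1 = ∫ y, (cos (t * (y - c)) - 1) ∂(gibbs V σ) := by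
    rw [integral_sub hi (integrable_const _), cf_re]; simp
  rw [e, ← integral_mul_const, ← Real.norm_eq_abs]
  refine norm_integral_le_of_norm_le ((h.integrable_abs_pow σ c 2).mul_const _)
    (Filter.Eventually.of_forall fun y => ?_)
  rw [Real.norm_eq_abs, sq_abs, ← mul_pow, abs_le]
  have h1 := Real.one_sub_sq_div_two_le_cos (x := t * (y - c))
  have h2 := Real.cos_le_one (t * (y - c))
  constructor <;> nlinarith [sq_nonneg (t * (y - c))]

lemma abs_cf_im_le (h : UnifConvex V κ) (σ c t : ℝ) :
    |(cf (gibbs V σ) c t).im| ≤ (∫ y, |y - c| ^ 1 ∂(gibbs V σ)) * |t| := by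
  have := h.isProb σ
  rw [cf_im, ← integral_mul_const, ← Real.norm_eq_abs]
  refine norm_integral_le_of_norm_le ((h.integrable_abs_pow σ c 1).mul_const _)
    (Filter.Eventually.of_forall fun y => ?_)
  rw [Real.norm_eq_abs, pow_one, ← abs_mul, mul_comm]
  exact abs_sin_le_abs

/-- When the recentring is at the mean, the linear term of the imaginary part cancels. -/
lemma abs_cf_im_le_cube (h : UnifConvex V κ) (σ c t : ℝ) (hc : ∫ y, y ∂(gibbs V σ) = c) :
    |(cf (gibbs V σ) c t).im| ≤ (∫ y, |y - c| ^ 3 ∂(gibbs V σ)) * |t| ^ 3 := by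
  have := h.isProb σ
  have hi : Integrable (fun y => sin (t * (y - c))) (gibbs V σ) :=
    (integrable_const (1 : ℝ)).mono' (by fun_prop)
      (Filter.Eventually.of_forall fun y => abs_sin_le_one _)
  have e : (cf (gibbs V σ) c t).im = ∫ y, (sin (t * (y - c)) - t * (y - c)) ∂(gibbs V σ) := by
    rw [integral_sub hi ((h.integrable_sub σ c).const_mul t), cf_im, integral_const_mul,
      integral_sub (h.integrable_id σ) (integrable_const _), hc]
    simp
  rw [e, ← integral_mul_const, ← Real.norm_eq_abs]
  refine norm_integral_le_of_norm_le ((h.integrable_abs_pow σ c 3).mul_const _)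
    (Filter.Eventually.of_forall fun y => ?_)
  rw [Real.norm_eq_abs, ← mul_pow, ← abs_mul, mul_comm (y - c)]
  exact abs_sin_sub_le _

lemma variance_pos (h : UnifConvex V κ) (σ c : ℝ) : 0 < ∫ y, |y - c| ^ 2 ∂(gibbs V σ) := by
  rw [h.integral_gibbs, smul_eq_mul]
  refine mul_pos (inv_pos.2 (h.Z_pos σ)) ?_
  have hi := (h.integrable_gibbs σ _).1 (h.integrable_abs_pow σ c 2)
  rw [integral_pos_iff_support_of_nonneg
    (fun y => by simp only [Pi.zero_apply, smul_eq_mul]; positivity) hi]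
  have : Function.support (fun y => rexp (σ * y - V y) • |y - c| ^ 2) = {c}ᶜ := by
    ext y
    simp [sub_eq_zero]
  rw [this, measure_compl (MeasurableSet.singleton c) (by simp)]
  simp

/-- The score `V' - σ` has a finite second moment when `V''` is bounded above. -/
lemma integrable_score_sq (h : UnifConvex V κ) {K : ℝ} (hK : ∀ y, deriv (deriv V) y ≤ K)
    (σ : ℝ) : Integrable (fun y => (deriv V y - σ) ^ 2) (gibbs V σ) := by
  have hd' : Differentiable ℝ (deriv V) := h.smooth.differentiable_deriv_two
  have hKn : 0 ≤ K := h.pos.le.trans ((h.le_deriv2 0).trans (hK 0))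
  have hb : ∀ y, ‖deriv (deriv V) y‖ ≤ K := fun y => by
    rw [Real.norm_of_nonneg (h.pos.le.trans (h.le_deriv2 y))]; exact hK y
  have hl : ∀ y, |deriv V y - deriv V 0| ≤ K * |y| := fun y => by
    simpa using Convex.norm_image_sub_le_of_norm_deriv_le (f := deriv V) (s := Set.univ)
      (fun x _ => hd' x) (fun x _ => hb x) convex_univ (Set.mem_univ 0) (Set.mem_univ y)
  have := h.isProb σ
  refine (((h.integrable_abs_pow σ 0 2).const_mul (2 * K ^ 2)).add
    (integrable_const (2 * (deriv V 0 - σ) ^ 2))).mono'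
    ((hd'.continuous.sub continuous_const).pow 2).aestronglyMeasurable
    (Filter.Eventually.of_forall fun y => ?_)
  have h1 : (deriv V y - deriv V 0) ^ 2 ≤ K ^ 2 * |y - 0| ^ 2 := by
    rw [← mul_pow, ← sq_abs (deriv V y - deriv V 0), sub_zero]
    exact pow_le_pow_left₀ (abs_nonneg _) (hl y) 2
  rw [Real.norm_of_nonneg (sq_nonneg _), Pi.add_apply]
  nlinarith [sq_nonneg ((deriv V y - deriv V 0) - (deriv V 0 - σ))]

lemma integrable_score (h : UnifConvex V κ) {K : ℝ} (hK : ∀ y, deriv (deriv V) y ≤ K)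
    (σ : ℝ) : Integrable (fun y => deriv V y - σ) (gibbs V σ) := by
  have hd' : Differentiable ℝ (deriv V) := h.smooth.differentiable_deriv_two
  have := h.isProb σ
  refine ((h.integrable_score_sq hK σ).add (integrable_const 1)).mono'
    (hd'.continuous.sub continuous_const).aestronglyMeasurable
    (Filter.Eventually.of_forall fun y => ?_)
  rw [Real.norm_eq_abs, Pi.add_apply]
  rw [abs_le]; constructor <;> nlinarith [sq_nonneg (deriv V y - σ - 1),
    sq_nonneg (deriv V y - σ + 1)]

lemma integrable_score_mul_exp (h : UnifConvex V κ) {K : ℝ} (hK : ∀ y, deriv (deriv V) y ≤ K)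
    (σ c t : ℝ) : Integrable (fun y : ℝ => ((deriv V y - σ : ℝ) : ℂ) *
      Complex.exp ((t * (y - c) : ℝ) * Complex.I)) (gibbs V σ) := by
  have hd' : Continuous (deriv V) := h.smooth.differentiable_deriv_two.continuous
  refine (h.integrable_score hK σ).norm.mono' (by fun_prop)
    (Filter.Eventually.of_forall fun y => ?_)
  rw [norm_mul, Complex.norm_exp_ofReal_mul_I, mul_one, Complex.norm_real]

/-- Integration by parts against the Gibbs weight. -/
lemma integral_score_mul_exp (h : UnifConvex V κ) {K : ℝ} (hK : ∀ y, deriv (deriv V) y ≤ K)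
    (σ c t : ℝ) : ∫ y, ((deriv V y - σ : ℝ) : ℂ) *
      Complex.exp ((t * (y - c) : ℝ) * Complex.I) ∂(gibbs V σ)
      = t * Complex.I * cf (gibbs V σ) c t := by
  have := h.isProb σ
  have hi1 := h.integrable_score_mul_exp hK σ c t
  have hi2 := (integrable_cf (gibbs V σ) c t).const_mul (t * Complex.I)
  rw [cf, ← integral_const_mul, ← sub_eq_zero, ← integral_sub hi1 hi2, h.integral_gibbs]
  have hd : Differentiable ℝ V := h.smooth.differentiable (by norm_num)
  have hfi : Integrable (fun y : ℝ => rexp (σ * y - V y) •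
      Complex.exp ((t * (y - c) : ℝ) * Complex.I)) :=
    (h.integrable_gibbs σ _).1 (integrable_cf (gibbs V σ) c t)
  have hfi' := ((h.integrable_gibbs σ _).1 (hi1.sub hi2)).neg
  have hder : ∀ y, HasDerivAt (fun y : ℝ => rexp (σ * y - V y) •
      Complex.exp ((t * (y - c) : ℝ) * Complex.I)) (-(rexp (σ * y - V y) •
      (((deriv V y - σ : ℝ) : ℂ) * Complex.exp ((t * (y - c) : ℝ) * Complex.I) -
        t * Complex.I * Complex.exp ((t * (y - c) : ℝ) * Complex.I)))) y := by
    intro y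
    have d1 : HasDerivAt (fun y => rexp (σ * y - V y)) (rexp (σ * y - V y) * (σ * 1 - deriv V y)) y :=
      (((hasDerivAt_id y).const_mul σ).sub (hd y).hasDerivAt).exp
    have d2 : HasDerivAt (fun y : ℝ => t * (y - c)) (t * 1) y :=
      ((hasDerivAt_id y).sub_const c).const_mul t
    have d3 := (d2.ofReal_comp.mul_const Complex.I).cexp
    refine HasDerivAt.congr_deriv (d1.smul d3) ?_
    simp only [Complex.real_smul]
    push_cast
    ring
  have h0 := integral_eq_zero_of_hasDerivAt_of_integrable hder hfi' hfi
  rw [integral_neg, neg_eq_zero] at h0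
  rw [h0, smul_zero]

lemma integral_score (h : UnifConvex V κ) {K : ℝ} (hK : ∀ y, deriv (deriv V) y ≤ K)
    (σ : ℝ) : ∫ y, (deriv V y - σ) ∂(gibbs V σ) = 0 := by
  have := h.integral_score_mul_exp hK σ 0 0
  simp only [zero_mul, Complex.ofReal_zero, Complex.exp_zero, mul_one] at this
  rw [integral_complex_ofReal] at this
  exact_mod_cast this

/-- A Cramér–Rao type inequality: with `J` the second moment of the score (plus one, to
make `J` positive at no cost), the characteristic function satisfies
`t² |cf|² ≤ J (1 - |cf|²)`. It controls the decay of `cf` both near the origin and at infinity. -/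
lemma exists_cf_decay (h : UnifConvex V κ) {K : ℝ} (hK : ∀ y, deriv (deriv V) y ≤ K)
    (σ c : ℝ) : ∃ J : ℝ, 0 < J ∧ ∀ t, t ^ 2 * ‖cf (gibbs V σ) c t‖ ^ 2 ≤
      J * (1 - ‖cf (gibbs V σ) c t‖ ^ 2) := by
  have := h.isProb σ
  set μ := gibbs V σ
  set J := (∫ y, (deriv V y - σ) ^ 2 ∂μ) + 1
  have hJ : 0 < J := by
    have : 0 ≤ ∫ y, (deriv V y - σ) ^ 2 ∂μ := integral_nonneg fun y => sq_nonneg _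
    positivity
  refine ⟨J, hJ, fun t => ?_⟩
  set a := cf μ c t with ha
  set f : ℝ → ℂ := fun y => Complex.exp ((t * (y - c) : ℝ) * Complex.I) with hf
  have hfi : Integrable f μ := integrable_cf μ c t
  have hfn : ∀ y, ‖f y‖ = 1 := fun y => Complex.norm_exp_ofReal_mul_I _
  -- `‖f - a‖²` integrates to `1 - ‖a‖²`
  have hexp : ∀ y, ‖f y - a‖ ^ 2 = 1 + ‖a‖ ^ 2 - 2 * (f y * (starRingEnd ℂ) a).re := fun y => by
    rw [← Complex.normSq_eq_norm_sq, Complex.normSq_sub, Complex.normSq_eq_norm_sq,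
      Complex.normSq_eq_norm_sq, hfn]; norm_num
  have hre : Integrable (fun y => (f y * (starRingEnd ℂ) a).re) μ := (hfi.mul_const _).re
  have hDi : Integrable (fun y => ‖f y - a‖ ^ 2) μ := by
    simp_rw [hexp]
    exact (integrable_const _).sub (hre.const_mul 2)
  have hD : ∫ y, ‖f y - a‖ ^ 2 ∂μ = 1 - ‖a‖ ^ 2 := by
    simp_rw [hexp]
    rw [integral_sub (integrable_const _) (hre.const_mul 2), integral_const_mul]
    have : ∫ y, (f y * (starRingEnd ℂ) a).re ∂μ = ‖a‖ ^ 2 := by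
      have e := integral_re (𝕜 := ℂ) (hfi.mul_const ((starRingEnd ℂ) a))
      simp only [RCLike.re_eq_complex_re] at e
      rw [e, integral_mul_const]
      change (a * (starRingEnd ℂ) a).re = _
      rw [Complex.mul_conj, Complex.normSq_eq_norm_sq, Complex.ofReal_re]
    rw [this]; simp; ring
  -- integration by parts, with the constant `a` subtracted
  have hibp : t * Complex.I * a = ∫ y, ((deriv V y - σ : ℝ) : ℂ) * (f y - a) ∂μ := by
    have i1 := h.integrable_score_mul_exp hK σ c t
    have i2 : Integrable (fun y => ((deriv V y - σ : ℝ) : ℂ) * a) μ :=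
      (h.integrable_score hK σ).ofReal.mul_const a
    simp_rw [mul_sub]
    rw [integral_sub i1 i2, h.integral_score_mul_exp hK σ c t, integral_mul_const,
      integral_complex_ofReal, h.integral_score hK σ]
    simp [ha, μ]
  have hq : ∀ l : ℝ, 0 < l → |t| * ‖a‖ ≤ l * J / 2 + (1 - ‖a‖ ^ 2) / (2 * l) := by
    intro l hl
    have e : |t| * ‖a‖ = ‖t * Complex.I * a‖ := by simp
    rw [e, hibp]
    have hsq := h.integrable_score_sq hK σ
    calc ‖∫ y, ((deriv V y - σ : ℝ) : ℂ) * (f y - a) ∂μ‖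
        ≤ ∫ y, (l / 2 * (deriv V y - σ) ^ 2 + (2 * l)⁻¹ * ‖f y - a‖ ^ 2) ∂μ := by
          refine norm_integral_le_of_norm_le ((hsq.const_mul _).add (hDi.const_mul _))
            (Filter.Eventually.of_forall fun y => ?_)
          rw [norm_mul, Complex.norm_real, Real.norm_eq_abs, ← sq_abs (deriv V y - σ)]
          set u := |deriv V y - σ|
          set v := ‖f y - a‖
          have : l / 2 * u ^ 2 + (2 * l)⁻¹ * v ^ 2 - u * v = (2 * l)⁻¹ * (l * u - v) ^ 2 := by
            field_simp; ring
          have : 0 ≤ (2 * l)⁻¹ * (l * u - v) ^ 2 := by positivity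
          linarith
      _ = l / 2 * (J - 1) + (2 * l)⁻¹ * (1 - ‖a‖ ^ 2) := by
          rw [integral_add (hsq.const_mul _) (hDi.const_mul _), integral_const_mul,
            integral_const_mul, hD]
          simp [J, μ]
      _ ≤ _ := by
          rw [div_eq_inv_mul (1 - ‖a‖ ^ 2)]
          nlinarith
  have ha1 : ‖a‖ ≤ 1 := norm_cf_le μ c t
  rcases eq_or_lt_of_le (show 0 ≤ |t| * ‖a‖ by positivity) with h0 | h0
  · have : t ^ 2 * ‖a‖ ^ 2 = 0 := by rw [← sq_abs, ← mul_pow, ← h0]; norm_num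
    rw [this]
    exact mul_nonneg hJ.le (by nlinarith [norm_nonneg a])
  · -- the optimal weight in the arithmetic-geometric inequality
    have := hq (|t| * ‖a‖ / J) (by positivity)
    rw [← sq_abs t, ← mul_pow]
    set q := |t| * ‖a‖
    have e1 : q / J * J / 2 = q / 2 := by field_simp
    have e2 : (1 - ‖a‖ ^ 2) / (2 * (q / J)) = J * (1 - ‖a‖ ^ 2) / (2 * q) := by field_simp
    rw [e1, e2] at this
    have : q / 2 ≤ J * (1 - ‖a‖ ^ 2) / (2 * q) := by linarith
    rw [le_div_iff₀ (by positivity)] at this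
    nlinarith

end UnifConvex

/-! ### Integrals of powers of characteristic functions -/

/-- Bernoulli's inequality with exponent `n / 6` turns the decay hypothesis, i.e.
`(1 + s / J) r² ≤ 1`, into a cubic decay of `r ^ n` at the scale `s ∼ J / n`. -/
lemma pow_le_of_decay {r s J : ℝ} (hJ : 0 < J) (hs : 0 ≤ s)
    (h : s * r ^ 2 ≤ J * (1 - r ^ 2)) {n : ℕ} (hn : 6 ≤ n) :
    r ^ n ≤ ((1 + n / (6 * J) * s)⁻¹) ^ 3 := by
  set x := s / J
  have hx : 0 ≤ x := by positivity
  have h1 : (1 + x) * r ^ 2 ≤ 1 := by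
    have : x * r ^ 2 ≤ 1 - r ^ 2 := by
      rw [show x * r ^ 2 = s * r ^ 2 / J by simp only [x]; ring, div_le_iff₀ hJ]; linarith
    linarith
  have h2 : (1 + n / (6 * J) * s) ^ 6 ≤ (1 + x) ^ n := by
    have hn' : (1 : ℝ) ≤ n / 6 := by
      rw [le_div_iff₀ (by norm_num)]; exact_mod_cast (by omega : 1 * 6 ≤ n)
    have hb := one_add_mul_self_le_rpow_one_add (s := x) (by linarith) hn'
    have e : (1 + x) ^ n = ((1 + x) ^ ((n : ℝ) / 6)) ^ 6 := by
      rw [← Real.rpow_natCast, ← Real.rpow_natCast, ← Real.rpow_mul (by linarith)]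
      congr 1; push_cast; ring
    rw [e]
    have e2 : 1 + n / (6 * J) * s = 1 + n / 6 * x := by simp only [x]; field_simp
    rw [e2]
    exact pow_le_pow_left₀ (by positivity) hb 6
  set y := 1 + n / (6 * J) * s
  have hy : 0 < y := by positivity
  have h3 : (r ^ n * y ^ 3) ^ 2 ≤ 1 := by
    calc (r ^ n * y ^ 3) ^ 2 = (r ^ 2) ^ n * y ^ 6 := by ring
      _ ≤ (r ^ 2) ^ n * (1 + x) ^ n := by gcongr
      _ = ((1 + x) * r ^ 2) ^ n := by rw [← mul_pow, mul_comm]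
      _ ≤ 1 := pow_le_one₀ (by positivity) h1
  have h4 : r ^ n * y ^ 3 ≤ 1 := by
    by_contra hc
    push Not at hc
    nlinarith
  rw [inv_pow, ← one_div, le_div_iff₀ (by positivity)]
  exact h4

lemma integrable_inv_one_add_mul_sq {c : ℝ} (hc : 0 < c) :
    Integrable (fun t : ℝ => (1 + c * t ^ 2)⁻¹) := by
  have := integrable_inv_one_add_sq.comp_mul_left' (R := √c) (by positivity)
  simpa [mul_pow, Real.sq_sqrt hc.le] using this

lemma integral_inv_one_add_mul_sq {c : ℝ} (hc : 0 < c) :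
    ∫ t : ℝ, (1 + c * t ^ 2)⁻¹ = π / √c := by
  have := Measure.integral_comp_mul_left (fun t : ℝ => (1 + t ^ 2)⁻¹) (√c)
  rw [integral_univ_inv_one_add_sq] at this
  simp only [mul_pow, Real.sq_sqrt hc.le] at this
  rw [this, abs_of_nonneg (by positivity), smul_eq_mul]
  ring

lemma abs_im_pow_le (z : ℂ) (n : ℕ) : |(z ^ (n + 1)).im| ≤ (n + 1) * |z.im| * ‖z‖ ^ n := by
  induction n with
  | zero => simp
  | succ n ih =>
    rw [pow_succ, Complex.mul_im]
    have h1 : |(z ^ (n + 1)).re| ≤ ‖z‖ ^ (n + 1) := by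
      rw [← norm_pow]; exact Complex.abs_re_le_norm _
    have h2 := Complex.abs_re_le_norm z
    calc |(z ^ (n + 1)).re * z.im + (z ^ (n + 1)).im * z.re|
        ≤ |(z ^ (n + 1)).re| * |z.im| + |(z ^ (n + 1)).im| * |z.re| := by
          rw [← abs_mul, ← abs_mul]; exact abs_add_le _ _
      _ ≤ ‖z‖ ^ (n + 1) * |z.im| + ((n + 1) * |z.im| * ‖z‖ ^ n) * ‖z‖ := by gcongr
      _ = _ := by push_cast; ring

/-- With `c = 1 / (12 J)`, the `(N - 2)`-th power is dominated by an integrable function of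
`√N t`. -/
lemma pow_sub_two_le {r s J : ℝ} (hJ : 0 < J) (hs : 0 ≤ s)
    (h : s * r ^ 2 ≤ J * (1 - r ^ 2)) {N : ℕ} (hN : 8 ≤ N) :
    r ^ (N - 2) ≤ ((1 + (12 * J)⁻¹ * N * s)⁻¹) ^ 3 := by
  refine (pow_le_of_decay hJ hs h (n := N - 2) (by omega)).trans ?_
  have h1 : (N : ℝ) / 2 ≤ ((N - 2 : ℕ) : ℝ) := by
    rw [Nat.cast_sub (by omega)]
    have : (8 : ℝ) ≤ N := by exact_mod_cast hN
    push_cast; linarith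
  gcongr
  calc (12 * J)⁻¹ * N = (N / 2) / (6 * J) := by field_simp; norm_num
    _ ≤ _ := by gcongr

section decay

variable {a b : ℝ → ℂ} {J : ℝ}

lemma norm_pow_le_of_decay (hJ : 0 < J) (ha1 : ∀ t, ‖a t‖ ≤ 1)
    (hdec : ∀ t, t ^ 2 * ‖a t‖ ^ 2 ≤ J * (1 - ‖a t‖ ^ 2)) {N m : ℕ} (hN : 8 ≤ N)
    (hm : N - 2 ≤ m) (t : ℝ) : ‖a t‖ ^ m ≤ ((1 + (12 * J)⁻¹ * N * t ^ 2)⁻¹) ^ 3 :=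
  (pow_le_pow_of_le_one (norm_nonneg _) (ha1 t) hm).trans
    (pow_sub_two_le hJ (sq_nonneg t) (hdec t) hN)

lemma inv_pow_three_le {x : ℝ} (hx : 0 ≤ x) : ((1 + x)⁻¹) ^ 3 ≤ (1 + x)⁻¹ :=
  pow_le_of_le_one (by positivity) (inv_le_one_of_one_le₀ (by linarith)) (by norm_num)

lemma integrable_mul_pow (hJ : 0 < J) (ha : Continuous a) (hb : Continuous b)
    (ha1 : ∀ t, ‖a t‖ ≤ 1) (hb1 : ∀ t, ‖b t‖ ≤ 1)
    (hdec : ∀ t, t ^ 2 * ‖a t‖ ^ 2 ≤ J * (1 - ‖a t‖ ^ 2)) {N : ℕ} (hN : 8 ≤ N) :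
    Integrable (fun t => b t * a t ^ (N - 1)) := by
  have hc : 0 < (12 * J)⁻¹ * N := by
    have : 0 < (N : ℝ) := by exact_mod_cast (by omega : 0 < N)
    positivity
  refine (integrable_inv_one_add_mul_sq hc).mono' (by fun_prop)
    (Filter.Eventually.of_forall fun t => ?_)
  rw [norm_mul, norm_pow]
  calc ‖b t‖ * ‖a t‖ ^ (N - 1) ≤ 1 * ((1 + (12 * J)⁻¹ * N * t ^ 2)⁻¹) ^ 3 := by
        gcongr
        · exact hb1 t
        · exact norm_pow_le_of_decay hJ ha1 hdec hN (by omega) t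
    _ ≤ _ := by rw [one_mul]; exact inv_pow_three_le (by positivity)

/-- Replacing one factor `a` by `b` in `∫ a ^ N` changes the real part by `O(N ^ (-3/2))`: the
difference `b - a` is `O(|t|)`, its real part is `O(t²)`, and the imaginary part of
`a ^ (N - 1)` is `O(N |t|³)`. -/
lemma exists_replace_bound (hJ : 0 < J) (ha : Continuous a) (hb : Continuous b)
    (ha1 : ∀ t, ‖a t‖ ≤ 1) (hb1 : ∀ t, ‖b t‖ ≤ 1)
    (hdec : ∀ t, t ^ 2 * ‖a t‖ ^ 2 ≤ J * (1 - ‖a t‖ ^ 2))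
    {M : ℝ} (hM : 0 ≤ M) (hre : ∀ t, |(b t - a t).re| ≤ M * t ^ 2)
    (him : ∀ t, |(b t - a t).im| ≤ M * |t|) (him3 : ∀ t, |(a t).im| ≤ M * |t| ^ 3) :
    ∃ C : ℝ, 0 ≤ C ∧ ∀ N : ℕ, 8 ≤ N →
      |(∫ t, b t * a t ^ (N - 1)).re - (∫ t, a t ^ N).re| ≤ C / N / √N := by
  set c := (12 * J)⁻¹ with hc
  have hc0 : 0 < c := by positivity
  set D := M / c + M ^ 2 / c ^ 2
  have hD : 0 ≤ D := by positivity
  refine ⟨D * (π / √c), by positivity, fun N hN => ?_⟩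
  have hN0 : 0 < (N : ℝ) := by exact_mod_cast (by omega : 0 < N)
  have i1 := integrable_mul_pow hJ ha hb ha1 hb1 hdec hN
  have i2 := integrable_mul_pow hJ ha ha ha1 ha1 hdec hN
  have e : ∀ t, a t ^ N = a t * a t ^ (N - 1) := fun t => by
    rw [← pow_succ']; congr 1; omega
  simp_rw [e]
  rw [← Complex.sub_re, ← integral_sub i1 i2]
  have e3 := integral_re (𝕜 := ℂ) (i1.sub i2)
  simp only [RCLike.re_eq_complex_re, Pi.sub_apply] at e3
  rw [← e3, ← Real.norm_eq_abs]
  have hcfi := (integrable_inv_one_add_mul_sq (mul_pos hc0 hN0)).const_mul (D / N)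
  calc ‖∫ t, (b t * a t ^ (N - 1) - a t * a t ^ (N - 1)).re‖
      ≤ ∫ t, D / N * (1 + c * N * t ^ 2)⁻¹ := by
        refine norm_integral_le_of_norm_le hcfi (Filter.Eventually.of_forall fun t => ?_)
        rw [Real.norm_eq_abs, ← sub_mul, Complex.mul_re]
        set q := c * N * t ^ 2 with hq
        have hq0 : 0 ≤ q := by positivity
        have p1 : ‖a t‖ ^ (N - 1) ≤ ((1 + q)⁻¹) ^ 3 :=
          norm_pow_le_of_decay hJ ha1 hdec hN (by omega) t
        have p2 : ‖a t‖ ^ (N - 2) ≤ ((1 + q)⁻¹) ^ 3 :=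
          norm_pow_le_of_decay hJ ha1 hdec hN le_rfl t
        have r1 : |(a t ^ (N - 1)).re| ≤ ((1 + q)⁻¹) ^ 3 :=
          (Complex.abs_re_le_norm _).trans (by rw [norm_pow]; exact p1)
        have r2 : |(a t ^ (N - 1)).im| ≤ N * (M * |t| ^ 3) * ((1 + q)⁻¹) ^ 3 := by
          have h1 := abs_im_pow_le (a t) (N - 2)
          have e1 : N - 2 + 1 = N - 1 := by omega
          rw [e1] at h1
          have e2 : ((N - 2 : ℕ) : ℝ) + 1 ≤ N := by exact_mod_cast (by omega : N - 2 + 1 ≤ N)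
          refine h1.trans ?_
          have := him3 t
          gcongr
        have hA : t ^ 2 = q / (c * N) := by rw [hq]; field_simp
        have hB : |t| * (|t| ^ 3) = (q / (c * N)) ^ 2 := by
          rw [← hA, ← sq_abs t]; ring
        have hu : 0 < (1 + q)⁻¹ := by positivity
        have hu1 : q * (1 + q)⁻¹ ≤ 1 := by
          rw [← div_eq_mul_inv, div_le_one (by positivity)]; linarith
        have hu2 : (1 + q)⁻¹ ≤ 1 := inv_le_one_of_one_le₀ (by linarith)
        set u := (1 + q)⁻¹
        calc |(b t - a t).re * (a t ^ (N - 1)).re - (b t - a t).im * (a t ^ (N - 1)).im|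
            ≤ |(b t - a t).re| * |(a t ^ (N - 1)).re| +
              |(b t - a t).im| * |(a t ^ (N - 1)).im| := by
              rw [← abs_mul, ← abs_mul]; exact abs_sub _ _
          _ ≤ (M * t ^ 2) * u ^ 3 + (M * |t|) * (N * (M * |t| ^ 3) * u ^ 3) := by
              have := hre t
              have := him t
              gcongr
          _ = M * t ^ 2 * u ^ 3 + M ^ 2 * N * (|t| * |t| ^ 3) * u ^ 3 := by ring
          _ = (M / c / N) * ((q * u) * u) * u + M ^ 2 / c ^ 2 / N * (q * u) ^ 2 * u := by
              rw [hA, hB]; field_simp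
          _ ≤ (M / c / N) * (1 * 1) * u + M ^ 2 / c ^ 2 / N * 1 ^ 2 * u := by
              gcongr
          _ = D / N * u := by simp only [D]; ring
    _ = D * (π / √c) / N / √N := by
        rw [integral_const_mul, integral_inv_one_add_mul_sq (mul_pos hc0 hN0),
          Real.sqrt_mul hc0.le]
        field_simp

/-- If `a (u / √N) ^ N` tends to a centred Gaussian, then `∫ a ^ N` is at least of order
`1 / √N`. -/
lemma exists_lower_bound (hJ : 0 < J) (ha : Continuous a) (ha1 : ∀ t, ‖a t‖ ≤ 1)
    (hdec : ∀ t, t ^ 2 * ‖a t‖ ^ 2 ≤ J * (1 - ‖a t‖ ^ 2)) {v : ℝ} (hv : 0 < v)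
    (hlim : ∀ u : ℝ, Filter.Tendsto (fun N : ℕ => a ((√N)⁻¹ * u) ^ N) Filter.atTop
      (nhds ((rexp (-v * u ^ 2) : ℝ) : ℂ))) :
    ∃ c₀ : ℝ, 0 < c₀ ∧ ∀ᶠ N : ℕ in Filter.atTop, c₀ / √N ≤ (∫ t, a t ^ N).re := by
  have hc0 : 0 < (12 * J)⁻¹ := by positivity
  have hlimI : Filter.Tendsto (fun N : ℕ => ∫ u : ℝ, a ((√N)⁻¹ * u) ^ N) Filter.atTop
      (nhds (∫ u : ℝ, ((rexp (-v * u ^ 2) : ℝ) : ℂ))) := by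
    refine tendsto_integral_filter_of_dominated_convergence
      (fun u => (1 + (12 * J)⁻¹ * u ^ 2)⁻¹) (Filter.Eventually.of_forall fun N => by fun_prop)
      ?_ (integrable_inv_one_add_mul_sq hc0) (Filter.Eventually.of_forall hlim)
    filter_upwards [Filter.eventually_ge_atTop 8] with N hN
    refine Filter.Eventually.of_forall fun u => ?_
    have hN0 : 0 < (N : ℝ) := by exact_mod_cast (by omega : 0 < N)
    rw [norm_pow]
    refine (norm_pow_le_of_decay hJ ha1 hdec hN (by omega) _).trans ?_
    have e : (12 * J)⁻¹ * N * ((√N)⁻¹ * u) ^ 2 = (12 * J)⁻¹ * u ^ 2 := by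
      rw [mul_pow, inv_pow, Real.sq_sqrt hN0.le]; field_simp
    rw [e]
    exact inv_pow_three_le (by positivity)
  rw [integral_complex_ofReal, integral_gaussian] at hlimI
  have hre := (Complex.continuous_re.tendsto _).comp hlimI
  rw [Complex.ofReal_re] at hre
  have hL : 0 < √(π / v) := by positivity
  refine ⟨√(π / v) / 2, by positivity, ?_⟩
  filter_upwards [hre.eventually (lt_mem_nhds (half_lt_self hL)), Filter.eventually_gt_atTop 0]
    with N hN hN0
  have hN0' : 0 < √(N : ℝ) := by positivity
  have e := Measure.integral_comp_mul_left (fun t : ℝ => a t ^ N) (√N)⁻¹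
  rw [inv_inv, abs_of_pos hN0'] at e
  simp only [Function.comp] at hN
  rw [e, Complex.real_smul, Complex.re_ofReal_mul] at hN
  rw [div_le_iff₀' hN0']
  exact hN.le

end decay

/-- The pointwise central limit theorem for the recentred characteristic function. -/
lemma UnifConvex.tendsto_cf_pow {V : ℝ → ℝ} {κ : ℝ} (h : UnifConvex V κ) (σ c : ℝ)
    (hc : ∫ y, y ∂(gibbs V σ) = c) (u : ℝ) :
    Filter.Tendsto (fun N : ℕ => cf (gibbs V σ) c ((√N)⁻¹ * u) ^ N) Filter.atTop
      (nhds ((rexp (-((∫ y, |y - c| ^ 2 ∂(gibbs V σ)) / 2) * u ^ 2) : ℝ) : ℂ)) := by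
  have := h.isProb σ
  set v := ∫ y, |y - c| ^ 2 ∂(gibbs V σ) with hv
  have hv0 : 0 < v := h.variance_pos σ c
  have hs : 0 < √v := Real.sqrt_pos.2 hv0
  have hX : AEMeasurable (fun y : ℝ => (√v)⁻¹ * (y - c)) (gibbs V σ) := by fun_prop
  have key := ProbabilityTheory.tendsto_charFun_inv_sqrt_mul_pow (P := gibbs V σ)
    (X := fun y => (√v)⁻¹ * (y - c)) hX (by
      rw [integral_const_mul, integral_sub (h.integrable_id σ) (integrable_const _), hc]
      simp) (by
      have : (fun y : ℝ => (√v)⁻¹ * (y - c)) ^ 2 = fun y => v⁻¹ * |y - c| ^ 2 := by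
        funext y
        rw [Pi.pow_apply, mul_pow, inv_pow, Real.sq_sqrt hv0.le, sq_abs]
      rw [this, integral_const_mul, ← hv, inv_mul_cancel₀ hv0.ne']) (√v * u)
  have e : ∀ N : ℕ, charFun ((gibbs V σ).map fun y => (√v)⁻¹ * (y - c)) ((√N)⁻¹ * (√v * u)) =
      cf (gibbs V σ) c ((√N)⁻¹ * u) := by
    intro N
    rw [charFun_apply_real, integral_map hX (by fun_prop), cf]
    congr 1 with y
    congr 2
    rw [← Complex.ofReal_mul]
    congr 1
    field_simp
  simp_rw [e] at key
  convert key using 2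
  rw [Complex.ofReal_exp]
  congr 1
  push_cast
  rw [mul_pow, ← Complex.ofReal_pow (√v), Real.sq_sqrt hv0.le]
  ring

/-! ### Fourier inversion for the density at the origin -/

/-- Exponential tilting of a Gibbs measure, at the level of Fourier–Laplace transforms. -/
lemma UnifConvex.integral_tilt {V : ℝ → ℝ} {κ : ℝ} (h : UnifConvex V κ) (σ₀ σ A m ξ : ℝ) :
    ∫ y : ℝ, Complex.exp ((-(ξ * Complex.I) - (σ - σ₀ : ℝ)) * (y - m)) ∂(gibbs V σ) =
      Complex.exp ((σ - σ₀ : ℝ) * m + ξ * Complex.I * (m - A)) *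
        (((∫ y, rexp (σ₀ * y - V y)) / (∫ y, rexp (σ * y - V y)) : ℝ) : ℂ) *
        cf (gibbs V σ₀) A (-ξ) := by
  rw [cf, h.integral_gibbs, h.integral_gibbs]
  set Z₀ := ∫ y, rexp (σ₀ * y - V y) with hZ₀
  set Z := ∫ y, rexp (σ * y - V y) with hZ
  have h0 : (Z₀ : ℂ) ≠ 0 := by exact_mod_cast (h.Z_pos σ₀).ne'
  have h1 : (Z : ℂ) ≠ 0 := by exact_mod_cast (h.Z_pos σ).ne'
  have e : ∫ y : ℝ, rexp (σ * y - V y) •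
        Complex.exp ((-(ξ * Complex.I) - (σ - σ₀ : ℝ)) * (y - m)) =
      Complex.exp ((σ - σ₀ : ℝ) * m + ξ * Complex.I * (m - A)) *
      ∫ y : ℝ, rexp (σ₀ * y - V y) • Complex.exp ((-ξ * (y - A) : ℝ) * Complex.I) := by
    rw [← integral_const_mul]
    congr 1 with y
    simp only [Complex.real_smul, Complex.ofReal_exp, ← Complex.exp_add]
    congr 1
    push_cast
    ring
  rw [e]
  simp only [Complex.real_smul, Complex.ofReal_inv, Complex.ofReal_div]
  field_simp

open FourierTransform in
/-- Fourier inversion for the normalised sum of independent Gibbs variables with parameter `σ`,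
written through characteristic functions at a reference parameter `σ₀`. The exponential tilt
between the two parameters only produces an explicit prefactor, since the means add up to
`N * A`. -/
lemma density_at_zero {N : ℕ} (hN : 0 < N) (V : Fin N → ℝ → ℝ) (κ : Fin N → ℝ)
    (h : ∀ i, UnifConvex (V i) (κ i)) (σ₀ σ A : ℝ) {G : ℝ → ℝ} (hG : Continuous G)
    (hm : ∑ i, gibbsMean (V i) σ = N * A)
    (hmap : Measure.map
        (fun x : Fin N → ℝ => (√N)⁻¹ * ∑ i, (x i - gibbsMean (V i) σ))
        (Measure.pi fun i => gibbs (V i) σ) = volume.withDensity fun t => ENNReal.ofReal (G t))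
    (hcfi : Integrable (fun t => ∏ i, cf (gibbs (V i) σ₀) A t)) :
    ((max (G 0) 0 : ℝ) : ℂ) =
      ((rexp ((σ - σ₀) * (N * A)) *
        ∏ i, ((∫ y, rexp (σ₀ * y - V i y)) / (∫ y, rexp (σ * y - V i y))) : ℝ) : ℂ) *
      ((√N / (2 * π) : ℝ) : ℂ) * ∫ t, ∏ i, cf (gibbs (V i) σ₀) A t := by
  have hp : ∀ i, IsProbabilityMeasure (gibbs (V i) σ) := fun i => (h i).isProb σ
  set m : Fin N → ℝ := fun i => gibbsMean (V i) σ with hmdef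
  set E : ℝ := rexp ((σ - σ₀) * (N * A)) *
        ∏ i, ((∫ y, rexp (σ₀ * y - V i y)) / (∫ y, rexp (σ * y - V i y))) with hE
  set s := √(N : ℝ) with hs
  have hs0 : 0 < s := Real.sqrt_pos.2 (by exact_mod_cast hN)
  set δ := σ - σ₀ with hδ
  have hT : Measurable (fun x : Fin N → ℝ => s⁻¹ * ∑ i, (x i - m i)) := by fun_prop
  -- the Fourier–Laplace transform of the law, as a product
  have hlap : ∀ w : ℝ, ∫ v : ℝ, Complex.exp ((-(w * Complex.I) - (δ * s : ℝ)) * v)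
      ∂(volume.withDensity fun t => ENNReal.ofReal (G t)) =
      (E : ℂ) * ∏ i, cf (gibbs (V i) σ₀) A (-(s⁻¹ * w)) := by
    intro w
    rw [← hmap, integral_map hT.aemeasurable (by fun_prop)]
    have e1 : ∀ x : Fin N → ℝ, Complex.exp ((-(w * Complex.I) - (δ * s : ℝ)) *
        ((s⁻¹ * ∑ i, (x i - m i) : ℝ) : ℂ)) =
        ∏ i, Complex.exp ((-((s⁻¹ * w : ℝ) * Complex.I) - (δ : ℝ)) * ((x i : ℂ) - m i)) := by
      intro x
      rw [← Complex.exp_sum, ← Finset.mul_sum]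
      congr 1
      have : (s : ℂ) ≠ 0 := by exact_mod_cast hs0.ne'
      push_cast
      field_simp
    simp_rw [e1]
    rw [integral_fintype_prod_eq_prod (fun i (y : ℝ) =>
      Complex.exp ((-((s⁻¹ * w : ℝ) * Complex.I) - (δ : ℝ)) * ((y : ℂ) - m i)))]
    simp_rw [hδ, (h _).integral_tilt σ₀ σ A]
    rw [Finset.prod_mul_distrib, Finset.prod_mul_distrib, ← Complex.exp_sum,
      Finset.sum_add_distrib, ← Finset.mul_sum, ← Finset.mul_sum, Finset.sum_sub_distrib]
    have hm' : ∑ i, (m i : ℂ) = N * A := by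
      have := congrArg (fun r : ℝ => (r : ℂ)) hm
      push_cast at this
      exact this
    rw [hm', hE]
    simp [hδ]
  have htr : ∀ t, (ENNReal.ofReal (G t)).toReal = max (G t) 0 := fun t => by
    rw [ENNReal.toReal_ofReal']
  set F : ℝ → ℂ := fun t => ((max (G t) 0 * rexp (-(δ * s) * t) : ℝ) : ℂ) with hF
  have hFc : Continuous F := by fun_prop
  have hFi : Integrable F := by
    have i1 : Integrable (fun v : ℝ => rexp (-(δ * s) * v))
        (volume.withDensity fun t => ENNReal.ofReal (G t)) := by
      rw [← hmap, integrable_map_measure (by fun_prop) hT.aemeasurable]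
      have e1 : ((fun v : ℝ => rexp (-(δ * s) * v)) ∘ fun x : Fin N → ℝ =>
          s⁻¹ * ∑ i, (x i - m i)) = fun x => ∏ i, (rexp (δ * m i) * rexp (-δ * x i)) := by
        funext x
        simp_rw [Function.comp, ← Real.exp_add]
        rw [← Real.exp_sum]
        congr 1
        have : -(δ * s) * (s⁻¹ * ∑ i, (x i - m i)) = -δ * ∑ i, (x i - m i) := by
          field_simp
        rw [this, Finset.mul_sum]
        congr 1 with i
        ring
      rw [e1]
      exact Integrable.fintype_prod (f := fun i y => rexp (δ * m i) * rexp (-δ * y))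
        (fun i => ((h i).integrable_exp σ (-δ)).const_mul _)
    rw [integrable_withDensity_iff_integrable_smul' (by fun_prop) (by simp)] at i1
    simp_rw [htr, smul_eq_mul] at i1
    exact i1.ofReal
  have hFF : ∀ w : ℝ, 𝓕 F w = (E : ℂ) * ∏ i, cf (gibbs (V i) σ₀) A (-(2 * π / s) * w) := by
    intro w
    have := hlap (2 * π * w)
    rw [integral_withDensity_eq_integral_toReal_smul (by fun_prop) (by simp)] at this
    rw [Real.fourier_real_eq_integral_exp_smul]
    convert this using 1
    · congr 1 with v
      rw [htr, hF]
      simp only [smul_eq_mul, Complex.real_smul, Complex.ofReal_mul, Complex.ofReal_exp]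
      rw [mul_left_comm, ← Complex.exp_add]
      congr 2
      push_cast
      ring
    · congr 2 with i
      congr 1
      ring
  have hκ : -(2 * π / s) ≠ 0 := by
    have := Real.pi_pos
    exact neg_ne_zero.2 (by positivity)
  have hFF' : 𝓕 F = fun w => (E : ℂ) * ∏ i, cf (gibbs (V i) σ₀) A (-(2 * π / s) * w) :=
    funext hFF
  have hFFi : Integrable (𝓕 F) := by
    rw [hFF']
    exact (hcfi.comp_mul_left' hκ).const_mul _
  have hinv := hFi.fourierInv_fourier_eq hFFi (v := 0) hFc.continuousAt
  rw [Real.fourierInv_eq'] at hinv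
  simp only [inner_zero_right, mul_zero, Complex.ofReal_zero, zero_mul, Complex.exp_zero,
    one_smul] at hinv
  rw [hFF', integral_const_mul,
    Measure.integral_comp_mul_left (fun t => ∏ i, cf (gibbs (V i) σ₀) A t)] at hinv
  have e0 : F 0 = ((max (G 0) 0 : ℝ) : ℂ) := by simp [hF]
  rw [← e0, ← hinv, Complex.real_smul, mul_assoc]
  congr 3
  rw [abs_inv, abs_neg, abs_of_pos (by positivity), inv_div]

/-- The case of one factor with potential `V₁` and `N - 1` factors with potential `V₂`, with
everything expressed in real numbers. -/
lemma density_at_zero_two {V₁ V₂ : ℝ → ℝ} {κ₁ κ₂ : ℝ} (h₁ : UnifConvex V₁ κ₁)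
    (h₂ : UnifConvex V₂ κ₂) (σ₀ σ A : ℝ) {N : ℕ} (hN : 0 < N) {G : ℝ → ℝ} (hG : Continuous G)
    (hm : gibbsMean V₁ σ + ((N : ℝ) - 1) * gibbsMean V₂ σ = N * A)
    (hmap : Measure.map
        (fun x : Fin N → ℝ => (√N)⁻¹ * ∑ i,
          (x i - if (i : ℕ) = 0 then gibbsMean V₁ σ else gibbsMean V₂ σ))
        (Measure.pi fun i : Fin N => if (i : ℕ) = 0 then gibbs V₁ σ else gibbs V₂ σ)
        = volume.withDensity fun t => ENNReal.ofReal (G t))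
    (hcfi : Integrable (fun t => cf (gibbs V₁ σ₀) A t * cf (gibbs V₂ σ₀) A t ^ (N - 1))) :
    max (G 0) 0 =
      (rexp ((σ - σ₀) * (N * A)) *
        (((∫ y, rexp (σ₀ * y - V₁ y)) / (∫ y, rexp (σ * y - V₁ y))) *
        ((∫ y, rexp (σ₀ * y - V₂ y)) / (∫ y, rexp (σ * y - V₂ y))) ^ (N - 1))) *
      (√N / (2 * π)) *
      (∫ t, cf (gibbs V₁ σ₀) A t * cf (gibbs V₂ σ₀) A t ^ (N - 1)).re := by
  obtain ⟨n, rfl⟩ : ∃ n, N = n + 1 := ⟨N - 1, by omega⟩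
  simp only [Nat.add_sub_cancel] at *
  have e1 : ∀ t, ∏ i : Fin (n + 1), cf (gibbs (if (i : ℕ) = 0 then V₁ else V₂) σ₀) A t =
      cf (gibbs V₁ σ₀) A t * cf (gibbs V₂ σ₀) A t ^ n := fun t => by
    rw [Fin.prod_univ_succ]; simp
  have e2 : ∏ i : Fin (n + 1), ((∫ y, rexp (σ₀ * y - (if (i : ℕ) = 0 then V₁ else V₂) y)) /
      (∫ y, rexp (σ * y - (if (i : ℕ) = 0 then V₁ else V₂) y))) =
      ((∫ y, rexp (σ₀ * y - V₁ y)) / (∫ y, rexp (σ * y - V₁ y))) *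
        ((∫ y, rexp (σ₀ * y - V₂ y)) / (∫ y, rexp (σ * y - V₂ y))) ^ n := by
    rw [Fin.prod_univ_succ]; simp [div_pow]
  have key := density_at_zero (Nat.succ_pos n) (fun i => if (i : ℕ) = 0 then V₁ else V₂)
    (fun i => if (i : ℕ) = 0 then κ₁ else κ₂)
    (fun i => by by_cases hi : (i : ℕ) = 0 <;> simp [hi, h₁, h₂]) σ₀ σ A hG
    (by
      rw [Fin.sum_univ_succ]
      simp only [Fin.val_zero, if_true, Fin.val_succ, Nat.add_eq_zero_iff, one_ne_zero, and_false,
        if_false, Finset.sum_const, Finset.card_univ, Fintype.card_fin, nsmul_eq_mul]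
      rw [← hm]; push_cast; ring)
    (by
      rw [← hmap]
      have e3 : ∀ i : Fin (n + 1), gibbs (if (i : ℕ) = 0 then V₁ else V₂) σ =
          if (i : ℕ) = 0 then gibbs V₁ σ else gibbs V₂ σ := fun i => by split_ifs <;> rfl
      have e4 : ∀ i : Fin (n + 1), gibbsMean (if (i : ℕ) = 0 then V₁ else V₂) σ =
          if (i : ℕ) = 0 then gibbsMean V₁ σ else gibbsMean V₂ σ := fun i => by split_ifs <;> rfl
      simp only [e3, e4])
    (by simp_rw [e1]; exact hcfi)
  simp_rw [e1] at key
  rw [e2] at key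
  have := congrArg Complex.re key
  rw [Complex.ofReal_re, ← Complex.ofReal_mul, Complex.re_ofReal_mul] at this
  exact this

/-! ### The logarithmic partition function -/

/-- The logarithmic partition function `σ ↦ log ∫ exp (σ y - V y) dy`. -/
def logZ (V : ℝ → ℝ) (σ : ℝ) : ℝ := Real.log (∫ y, rexp (σ * y - V y))

namespace UnifConvex

variable {V : ℝ → ℝ} {κ : ℝ}

lemma integrable_exp_sub (h : UnifConvex V κ) (σ δ m : ℝ) :
    Integrable (fun y => rexp (δ * (y - m))) (gibbs V σ) := by
  convert (h.integrable_exp σ δ).const_mul (rexp (-(δ * m))) using 2 with y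
  rw [← Real.exp_add]; ring_nf

lemma logZ_add (h : UnifConvex V κ) (σ δ m : ℝ) :
    logZ V (σ + δ) = logZ V σ + δ * m + Real.log (∫ y, rexp (δ * (y - m)) ∂(gibbs V σ)) := by
  have e : ∫ y, rexp ((σ + δ) * y - V y) = (∫ y, rexp (σ * y - V y)) * rexp (δ * m) *
      ∫ y, rexp (δ * (y - m)) ∂(gibbs V σ) := by
    rw [h.integral_gibbs, smul_eq_mul]
    have : ∫ y, rexp (σ * y - V y) • rexp (δ * (y - m)) =
        rexp (-(δ * m)) * ∫ y, rexp ((σ + δ) * y - V y) := by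
      rw [← integral_const_mul]
      congr 1 with y
      rw [smul_eq_mul, ← Real.exp_add, ← Real.exp_add]; ring_nf
    rw [this, Real.exp_neg]
    have := (h.Z_pos σ).ne'
    field_simp
  have := h.isProb σ
  have hp : 0 < ∫ y, rexp (δ * (y - m)) ∂(gibbs V σ) :=
    integral_exp_pos (h.integrable_exp_sub σ δ m)
  rw [logZ, e, Real.log_mul (mul_pos (h.Z_pos σ) (exp_pos _)).ne' hp.ne',
    Real.log_mul (h.Z_pos σ).ne' (exp_pos _).ne', Real.log_exp, logZ]

lemma integral_sub_mean (h : UnifConvex V κ) (σ : ℝ) :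
    ∫ y, (y - gibbsMean V σ) ∂(gibbs V σ) = 0 := by
  have := h.isProb σ
  rw [integral_sub (h.integrable_id σ) (integrable_const _), h.gibbsMean_eq]
  simp

/-- `logZ` lies above its tangent line (Jensen's inequality). -/
lemma logZ_ge (h : UnifConvex V κ) (σ δ : ℝ) :
    logZ V σ + δ * gibbsMean V σ ≤ logZ V (σ + δ) := by
  have := h.isProb σ
  rw [h.logZ_add σ δ (gibbsMean V σ)]
  have i := (h.integrable_sub σ (gibbsMean V σ)).const_mul δ
  have h1 : 1 ≤ ∫ y, rexp (δ * (y - gibbsMean V σ)) ∂(gibbs V σ) := by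
    calc (1 : ℝ) = ∫ y, (δ * (y - gibbsMean V σ) + 1) ∂(gibbs V σ) := by
          rw [integral_add i (integrable_const _), integral_const_mul, h.integral_sub_mean]; simp
      _ ≤ _ := integral_mono (i.add (integrable_const _)) (h.integrable_exp_sub σ δ _)
          fun y => Real.add_one_le_exp _
  linarith [Real.log_nonneg h1]

/-- `logZ` lies locally below a parabola with the same tangent line. -/
lemma logZ_le (h : UnifConvex V κ) (σ : ℝ) : ∃ C : ℝ, 0 ≤ C ∧ ∀ δ, |δ| ≤ 1 →
    logZ V (σ + δ) ≤ logZ V σ + δ * gibbsMean V σ + C * δ ^ 2 := by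
  have := h.isProb σ
  set m := gibbsMean V σ with hmdef
  have iC := h.integrable_pow_mul_exp σ m 1 2
  refine ⟨∫ y, |y - m| ^ 2 * rexp (1 * |y - m|) ∂(gibbs V σ),
    integral_nonneg fun y => by positivity, fun δ hδ => ?_⟩
  rw [h.logZ_add σ δ m]
  have i := (h.integrable_sub σ m).const_mul δ
  have i' : Integrable (fun y => δ * (y - m) + 1) (gibbs V σ) := i.add (integrable_const _)
  have hp : 0 < ∫ y, rexp (δ * (y - m)) ∂(gibbs V σ) :=
    integral_exp_pos (h.integrable_exp_sub σ δ m)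
  have h1 : ∫ y, rexp (δ * (y - m)) ∂(gibbs V σ) ≤
      1 + (∫ y, |y - m| ^ 2 * rexp (1 * |y - m|) ∂(gibbs V σ)) * δ ^ 2 := by
    calc ∫ y, rexp (δ * (y - m)) ∂(gibbs V σ) ≤
        ∫ y, ((δ * (y - m) + 1) + |y - m| ^ 2 * rexp (1 * |y - m|) * δ ^ 2) ∂(gibbs V σ) := by
          refine integral_mono (h.integrable_exp_sub σ δ _)
            (i'.add (iC.mul_const _)) fun y => ?_
          have h2 := Complex.norm_exp_sub_sum_le_norm_mul_exp ((δ * (y - m) : ℝ) : ℂ) 2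
          have e : Complex.exp ((δ * (y - m) : ℝ) : ℂ) - ∑ k ∈ Finset.range 2,
              ((δ * (y - m) : ℝ) : ℂ) ^ k / (k.factorial : ℂ) =
              ((rexp (δ * (y - m)) - (1 + δ * (y - m)) : ℝ) : ℂ) := by
            simp [Finset.sum_range_succ]
          rw [e, Complex.norm_real, Complex.norm_real, Real.norm_eq_abs, Real.norm_eq_abs] at h2
          have h3 := (abs_le.1 h2).2
          have h4 : |δ * (y - m)| ≤ 1 * |y - m| := by
            rw [abs_mul]; gcongr
          have h5 : |δ * (y - m)| ^ 2 * rexp |δ * (y - m)| ≤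
              |y - m| ^ 2 * rexp (1 * |y - m|) * δ ^ 2 := by
            calc |δ * (y - m)| ^ 2 * rexp |δ * (y - m)|
                ≤ |δ * (y - m)| ^ 2 * rexp (1 * |y - m|) := by gcongr
              _ = _ := by rw [abs_mul, mul_pow, sq_abs δ]; ring
          simp only
          linarith
      _ = _ := by
          rw [integral_add i' (iC.mul_const _),
            integral_add i (integrable_const _), integral_const_mul, h.integral_sub_mean,
            integral_mul_const]
          simp
  have := Real.log_le_sub_one_of_pos hp
  linarith

/-- Strong convexity of `logZ`. The shift `y ↦ y + δ / K` in the partition function, followed by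
Jensen's inequality, uses only the upper bound on `V''`. -/
lemma logZ_ge_sq (h : UnifConvex V κ) {K : ℝ} (hK : ∀ y, deriv (deriv V) y ≤ K) (σ δ : ℝ) :
    logZ V σ + δ * gibbsMean V σ + δ ^ 2 / (2 * K) ≤ logZ V (σ + δ) := by
  have := h.isProb σ
  have hK0 : 0 < K := h.pos.trans_le ((h.le_deriv2 0).trans (hK 0))
  set m := gibbsMean V σ
  set s := δ / K with hs
  set L := δ * m + δ ^ 2 / (2 * K) with hL
  have i1 := (h.integrable_sub σ m).const_mul δ
  have i2 := (h.integrable_score hK σ).const_mul s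
  have i3 : Integrable (fun y => δ * (y - m) - s * (deriv V y - σ)) (gibbs V σ) := i1.sub i2
  have hz : ∫ y, (δ * (y - m) - s * (deriv V y - σ) + 1) ∂(gibbs V σ) = 1 := by
    rw [integral_add i3 (integrable_const _), integral_sub i1 i2, integral_const_mul,
      integral_const_mul, h.integral_sub_mean, h.integral_score hK]
    simp
  rw [h.integral_gibbs, smul_eq_mul, inv_mul_eq_div, div_eq_one_iff_eq (h.Z_pos σ).ne'] at hz
  have hmain : (∫ y, rexp (σ * y - V y)) * rexp L ≤ ∫ y, rexp ((σ + δ) * y - V y) := by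
    rw [← hz, ← integral_mul_const,
      ← integral_add_right_eq_self (fun y => rexp ((σ + δ) * y - V y)) s]
    refine integral_mono
      (((h.integrable_gibbs σ _).1 (i3.add (integrable_const 1))).mul_const _)
      ((h.integrable_weight (σ + δ)).comp_add_right s) fun y => ?_
    simp only [smul_eq_mul]
    have t1 := taylor_upper h.smooth hK y (y + s)
    have t2 := Real.add_one_le_exp (δ * (y - m) - s * (deriv V y - σ))
    calc rexp (σ * y - V y) * (δ * (y - m) - s * (deriv V y - σ) + 1) * rexp L
        ≤ rexp (σ * y - V y) * rexp (δ * (y - m) - s * (deriv V y - σ)) * rexp L := by gcongr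
      _ = rexp (σ * y - V y + (δ * (y - m) - s * (deriv V y - σ)) + L) := by
          rw [← Real.exp_add, ← Real.exp_add]
      _ ≤ rexp ((σ + δ) * (y + s) - V (y + s)) := by
          apply Real.exp_le_exp.2
          have e : δ * s - K / 2 * s ^ 2 = δ ^ 2 / (2 * K) := by
            rw [hs]; field_simp; ring
          rw [hL, ← e]
          have e3 : y + s - y = s := by ring
          rw [e3] at t1
          nlinarith
  have := Real.log_le_log (mul_pos (h.Z_pos σ) (exp_pos _)) hmain
  rw [Real.log_mul (h.Z_pos σ).ne' (exp_pos _).ne', Real.log_exp] at this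
  simp only [logZ]
  linarith

end UnifConvex

lemma eq_zero_of_mul_le_sq {D C : ℝ} (hC : 0 ≤ C) (h : ∀ ε : ℝ, |ε| ≤ 1 → ε * D ≤ C * ε ^ 2) :
    D = 0 := by
  by_contra hD
  have hD' : 0 < |D| := abs_pos.2 hD
  -- test with `ε` of the sign of `D` and size `|D| / (2 (C + |D|))`
  set s := (2 * (C + |D|))⁻¹ with hs
  have hs0 : 0 < s := by positivity
  have hsD : s * (2 * (C + |D|)) = 1 := inv_mul_cancel₀ (by positivity)
  have h1 := h (s * D) (by
    rw [abs_mul, abs_of_pos hs0]; nlinarith [mul_nonneg hs0.le hC])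
  have h2 : s * D ^ 2 * (1 - C * s) ≤ 0 := by nlinarith
  have h3 : 0 < s * D ^ 2 := by positivity
  have h4 : C * s < 1 := by nlinarith [mul_pos hs0 hD', mul_nonneg hs0.le hC]
  nlinarith

/-! ### The tilting parameters -/

/-- The first-order condition for the unperturbed maximizer. -/
lemma UnifConvex.gibbsMean_eq_of_max {V : ℝ → ℝ} {κ : ℝ} (h : UnifConvex V κ) {A σ₀ : ℝ}
    (hmax : ∀ σ, σ * A - logZ V σ ≤ σ₀ * A - logZ V σ₀) : gibbsMean V σ₀ = A := by
  obtain ⟨C, hC, hle⟩ := h.logZ_le σ₀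
  have := eq_zero_of_mul_le_sq (D := A - gibbsMean V σ₀) hC fun ε hε => by
    have h1 := hmax (σ₀ + ε)
    have h2 := hle ε hε
    linarith
  linarith

/-- The first-order condition for the perturbed maximizer. The number of sites `n` is a real
number here, to avoid casts. -/
lemma gibbsMean_add_of_max {V₁ V₂ : ℝ → ℝ} {κ₁ κ₂ : ℝ} (h₁ : UnifConvex V₁ κ₁)
    (h₂ : UnifConvex V₂ κ₂) {A τ n : ℝ} (hn : 1 ≤ n)
    (hmax : ∀ σ, n * (σ * A) - (logZ V₁ σ + (n - 1) * logZ V₂ σ) ≤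
      n * (τ * A) - (logZ V₁ τ + (n - 1) * logZ V₂ τ)) :
    gibbsMean V₁ τ + (n - 1) * gibbsMean V₂ τ = n * A := by
  obtain ⟨C₁, hC₁, hle₁⟩ := h₁.logZ_le τ
  obtain ⟨C₂, hC₂, hle₂⟩ := h₂.logZ_le τ
  have hn' : 0 ≤ n - 1 := by linarith
  have := eq_zero_of_mul_le_sq (D := n * A - (gibbsMean V₁ τ + (n - 1) * gibbsMean V₂ τ))
    (C := C₁ + (n - 1) * C₂) (by positivity) fun ε hε => by
    have h0 := hmax (τ + ε)
    have h1 := hle₁ ε hε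
    have h2 := mul_le_mul_of_nonneg_left (hle₂ ε hε) hn'
    linarith
  linarith

/-- The perturbation of a single site moves the maximizer by `O(1 / n)`: the gain at the site is
linear in the displacement, the loss at the other `n - 1` sites is quadratic. -/
lemma tilt_bound {V₁ V₂ : ℝ → ℝ} {κ₁ κ₂ K : ℝ} (h₁ : UnifConvex V₁ κ₁)
    (h₂ : UnifConvex V₂ κ₂) (hK : ∀ y, deriv (deriv V₂) y ≤ K) {A σ₀ τ n : ℝ} (hn : 2 ≤ n)
    (hA : gibbsMean V₂ σ₀ = A)
    (hmax : ∀ σ, n * (σ * A) - (logZ V₁ σ + (n - 1) * logZ V₂ σ) ≤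
      n * (τ * A) - (logZ V₁ τ + (n - 1) * logZ V₂ τ)) :
    |τ - σ₀| ≤ 4 * K * |A - gibbsMean V₁ σ₀| / n := by
  have hK0 : 0 < K := h₂.pos.trans_le ((h₂.le_deriv2 0).trans (hK 0))
  obtain ⟨δ, rfl⟩ : ∃ δ, τ = σ₀ + δ := ⟨τ - σ₀, by ring⟩
  have h0 := hmax σ₀
  have h1 := h₁.logZ_ge σ₀ δ
  have h2 := mul_le_mul_of_nonneg_left (h₂.logZ_ge_sq hK σ₀ δ) (by linarith : 0 ≤ n - 1)
  rw [hA] at h2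
  rw [add_sub_cancel_left]
  have h3 : (n - 1) * (δ ^ 2 / (2 * K)) ≤ (A - gibbsMean V₁ σ₀) * δ := by linarith
  have h4 : (A - gibbsMean V₁ σ₀) * δ ≤ |A - gibbsMean V₁ σ₀| * |δ| := by
    rw [← abs_mul]; exact le_abs_self _
  rw [le_div_iff₀ (by linarith)]
  rcases eq_or_ne δ 0 with rfl | hδ
  · simp; positivity
  have h5 : 0 < |δ| := abs_pos.2 hδ
  have h6 : (n - 1) * (δ ^ 2 / (2 * K)) * (2 * K) = (n - 1) * (|δ| * |δ|) := by
    rw [abs_mul_abs_self]; field_simp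
  have h7 : (n - 1) * (|δ| * |δ|) ≤ (|A - gibbsMean V₁ σ₀| * |δ|) * (2 * K) := by
    rw [← h6]; exact mul_le_mul_of_nonneg_right (h3.trans h4) (by positivity)
  have h8 : (n - 1) * |δ| ≤ |A - gibbsMean V₁ σ₀| * (2 * K) := by
    refine le_of_mul_le_mul_right ?_ h5
    linarith
  nlinarith

/-- The normalization factor produced by moving the tilt from `τ` back to `σ₀` is
`exp (O(1 / n))`. -/
lemma log_prefactor_bound {V₁ V₂ : ℝ → ℝ} {κ₁ κ₂ : ℝ} (h₁ : UnifConvex V₁ κ₁)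
    (h₂ : UnifConvex V₂ κ₂) {A σ₀ B : ℝ} (hA : gibbsMean V₂ σ₀ = A) (hB : 0 ≤ B) :
    ∃ D : ℝ, 0 ≤ D ∧ ∀ n τ : ℝ, 1 ≤ n → B ≤ n → |τ - σ₀| ≤ B / n →
      |(τ - σ₀) * (n * A) + ((logZ V₁ σ₀ - logZ V₁ τ) + (n - 1) * (logZ V₂ σ₀ - logZ V₂ τ))|
        ≤ D / n := by
  obtain ⟨C₁, hC₁, hle₁⟩ := h₁.logZ_le σ₀
  obtain ⟨C₂, hC₂, hle₂⟩ := h₂.logZ_le σ₀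
  refine ⟨B * (|A - gibbsMean V₁ σ₀| + C₁) + C₂ * B ^ 2, by positivity,
    fun n τ hn hBn hτ => ?_⟩
  obtain ⟨δ, rfl⟩ : ∃ δ, τ = σ₀ + δ := ⟨τ - σ₀, by ring⟩
  rw [add_sub_cancel_left] at *
  have hn0 : 0 < n := by linarith
  have hδ1 : |δ| ≤ 1 := hτ.trans ((div_le_one hn0).2 hBn)
  have u1 := hle₁ δ hδ1
  have l1 := h₁.logZ_ge σ₀ δ
  have u2 := hle₂ δ hδ1
  have l2 := h₂.logZ_ge σ₀ δ
  rw [hA] at u2 l2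
  have hn1 : 0 ≤ n - 1 := by linarith
  have u2' := mul_le_mul_of_nonneg_left u2 hn1
  have l2' := mul_le_mul_of_nonneg_left l2 hn1
  have hsq : δ ^ 2 ≤ |δ| := by
    rw [← sq_abs]; nlinarith [abs_nonneg δ]
  have hsq2 : δ ^ 2 ≤ (B / n) ^ 2 := by
    rw [← sq_abs]; gcongr
  have e1 : |δ * (A - gibbsMean V₁ σ₀)| ≤ B / n * |A - gibbsMean V₁ σ₀| := by
    rw [abs_mul]; gcongr
  have e2 : C₁ * δ ^ 2 ≤ B / n * C₁ := by
    rw [mul_comm]; exact mul_le_mul_of_nonneg_right (hsq.trans hτ) hC₁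
  have e3 : (n - 1) * (C₂ * δ ^ 2) ≤ n * (C₂ * (B / n) ^ 2) := by
    gcongr; linarith
  have e4 : (B * (|A - gibbsMean V₁ σ₀| + C₁) + C₂ * B ^ 2) / n =
      B / n * |A - gibbsMean V₁ σ₀| + B / n * C₁ + n * (C₂ * (B / n) ^ 2) := by
    field_simp
  have p1 : 0 ≤ B / n * C₁ := by positivity
  have p2 : 0 ≤ n * (C₂ * (B / n) ^ 2) := by positivity
  have e1' := abs_le.1 e1
  rw [e4, abs_le]
  constructor <;> nlinarith

lemma abs_log_le {x e : ℝ} (he : e ≤ 1 / 2) (h : |x - 1| ≤ e) : |Real.log x| ≤ 2 * e := by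
  have h1 := abs_le.1 h
  have hx : 1 / 2 ≤ x := by linarith
  have hx0 : 0 < x := by linarith
  have u := Real.log_le_sub_one_of_pos hx0
  have l := Real.one_sub_inv_le_log_of_pos hx0
  have : x⁻¹ ≤ 1 + 2 * e := by
    rw [inv_le_iff_one_le_mul₀ hx0]; nlinarith
  rw [abs_le]; constructor <;> linarith

/-- `|log (g^P_{N,A}(0) / g_{N,A}(0))| ≤ C/N` for all large `N`. -/
theorem ratio_of_densities_estimate
    (ψ P : ℝ → ℝ) (κ₁ κ₂ ς₁ ς₂ : ℝ)
    (hψ : ContDiff ℝ 2 ψ) (hP : ContDiff ℝ 2 P)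
    (hκ₁ : 0 < κ₁) (hκ : κ₁ ≤ κ₂) (hς₁ : 0 < ς₁) (hς : ς₁ ≤ ς₂)
    (hψ'' : ∀ y : ℝ, κ₁ ≤ deriv (deriv ψ) y ∧ deriv (deriv ψ) y ≤ κ₂)
    (hψP'' : ∀ y : ℝ, ς₁ ≤ deriv (deriv (fun z => ψ z + P z)) y ∧
        deriv (deriv (fun z => ψ z + P z)) y ≤ ς₂)
    (A σ₀ : ℝ)
    (hσ₀ : ∀ σ : ℝ,
      σ * A - Real.log (∫ y : ℝ, Real.exp (-ψ y + σ * y)) ≤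
      σ₀ * A - Real.log (∫ y : ℝ, Real.exp (-ψ y + σ₀ * y)))
    (σP : ℕ → ℝ)
    (hσP : ∀ N : ℕ, 2 ≤ N → ∀ σ : ℝ,
      σ * A - (N : ℝ)⁻¹ *
        (Real.log (∫ y : ℝ, Real.exp (-(ψ y + P y) + σ * y)) +
         ((N : ℝ) - 1) * Real.log (∫ y : ℝ, Real.exp (-ψ y + σ * y))) ≤
      σP N * A - (N : ℝ)⁻¹ *
        (Real.log (∫ y : ℝ, Real.exp (-(ψ y + P y) + σP N * y)) +
         ((N : ℝ) - 1) * Real.log (∫ y : ℝ, Real.exp (-ψ y + σP N * y))))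
    (g gP : ℕ → ℝ → ℝ)
    (hgcont : ∀ N, Continuous (g N)) (hgPcont : ∀ N, Continuous (gP N))
    (hg : ∀ N : ℕ, 2 ≤ N →
      Measure.map
        (fun x : Fin N → ℝ => (Real.sqrt N)⁻¹ * ∑ i, (x i - gibbsMean ψ σ₀))
        (Measure.pi fun _ : Fin N => gibbs ψ σ₀)
      = volume.withDensity fun t => ENNReal.ofReal (g N t))
    (hgP : ∀ N : ℕ, 2 ≤ N →
      Measure.map
        (fun x : Fin N → ℝ => (Real.sqrt N)⁻¹ * ∑ i,
          (x i - if (i : ℕ) = 0 then gibbsMean (fun z => ψ z + P z) (σP N)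
                 else gibbsMean ψ (σP N)))
        (Measure.pi fun i : Fin N =>
          if (i : ℕ) = 0 then gibbs (fun z => ψ z + P z) (σP N) else gibbs ψ (σP N))
      = volume.withDensity fun t => ENNReal.ofReal (gP N t)) :
    ∃ C > 0, ∃ N₀ : ℕ, ∀ N : ℕ, N₀ ≤ N →
      |Real.log (gP N 0 / g N 0)| ≤ C / N := by
  have hU : UnifConvex ψ κ₁ := ⟨hψ, hκ₁, fun y => (hψ'' y).1⟩
  have hW : UnifConvex (fun z => ψ z + P z) ς₁ := ⟨hψ.add hP, hς₁, fun y => (hψP'' y).1⟩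
  have hK : ∀ y, deriv (deriv ψ) y ≤ κ₂ := fun y => (hψ'' y).2
  have hκ₂ : 0 < κ₂ := hκ₁.trans_le hκ
  simp only [neg_add_eq_sub] at hσ₀ hσP
  -- the first-order conditions for the two maximizers
  have hA : gibbsMean ψ σ₀ = A := hU.gibbsMean_eq_of_max hσ₀
  have hmax : ∀ N : ℕ, 2 ≤ N → ∀ σ : ℝ,
      (N : ℝ) * (σ * A) - (logZ (fun z => ψ z + P z) σ + ((N : ℝ) - 1) * logZ ψ σ) ≤
      (N : ℝ) * (σP N * A) -
        (logZ (fun z => ψ z + P z) (σP N) + ((N : ℝ) - 1) * logZ ψ (σP N)) := by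
    intro N hN σ
    have hN0 : (0 : ℝ) < N := by exact_mod_cast (by omega : 0 < N)
    have := mul_le_mul_of_nonneg_left (hσP N hN σ) hN0.le
    rwa [mul_sub, mul_sub, mul_inv_cancel_left₀ hN0.ne', mul_inv_cancel_left₀ hN0.ne'] at this
  set B := 4 * κ₂ * |A - gibbsMean (fun z => ψ z + P z) σ₀| with hBdef
  have hB : 0 ≤ B := by positivity
  obtain ⟨D, hD, hlogE⟩ := log_prefactor_bound hW hU hA hB
  -- characteristic functions at the common tilt `σ₀`
  have pU := hU.isProb σ₀
  have pW := hW.isProb σ₀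
  have hmean : ∫ y, y ∂(gibbs ψ σ₀) = A := by rw [← hU.gibbsMean_eq, hA]
  obtain ⟨J, hJ, hdec⟩ := hU.exists_cf_decay hK σ₀ A
  have ca := continuous_cf (gibbs ψ σ₀) A
  have cb := continuous_cf (gibbs (fun z => ψ z + P z) σ₀) A
  have na := norm_cf_le (gibbs ψ σ₀) A
  have nb := norm_cf_le (gibbs (fun z => ψ z + P z) σ₀) A
  have ra := hU.abs_cf_re_sub_one_le σ₀ A
  have rb := hW.abs_cf_re_sub_one_le σ₀ A
  have ja := hU.abs_cf_im_le σ₀ A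
  have jb := hW.abs_cf_im_le σ₀ A
  have ka := fun t => hU.abs_cf_im_le_cube σ₀ A t hmean
  have hlim := hU.tendsto_cf_pow σ₀ A hmean
  have hv := hU.variance_pos σ₀ A
  have q (n : ℕ) : 0 ≤ ∫ y, |y - A| ^ n ∂(gibbs ψ σ₀) := integral_nonneg fun y => by positivity
  have q' (n : ℕ) : 0 ≤ ∫ y, |y - A| ^ n ∂(gibbs (fun z => ψ z + P z) σ₀) :=
    integral_nonneg fun y => by positivity
  have q1 := q 1
  have q2 := q 2
  have q3 := q 3
  have q1' := q' 1
  have q2' := q' 2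
  set a := cf (gibbs ψ σ₀) A with hadef
  set b := cf (gibbs (fun z => ψ z + P z) σ₀) A with hbdef
  set m₁ := ∫ y, |y - A| ^ 1 ∂(gibbs ψ σ₀)
  set m₂ := ∫ y, |y - A| ^ 2 ∂(gibbs ψ σ₀)
  set m₃ := ∫ y, |y - A| ^ 3 ∂(gibbs ψ σ₀)
  set m₁' := ∫ y, |y - A| ^ 1 ∂(gibbs (fun z => ψ z + P z) σ₀)
  set m₂' := ∫ y, |y - A| ^ 2 ∂(gibbs (fun z => ψ z + P z) σ₀)
  obtain ⟨C₁, hC₁, hrep⟩ := exists_replace_bound hJ ca cb na nb hdec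
    (M := m₁ + m₂ + m₃ + m₁' + m₂') (by positivity)
    (fun t => by
      have h1 : |(b t - a t).re| ≤ |(b t).re - 1| + |(a t).re - 1| := by
        rw [Complex.sub_re, show (b t).re - (a t).re = ((b t).re - 1) - ((a t).re - 1) by ring]
        exact abs_sub _ _
      have h2 := ra t
      have h3 := rb t
      have h4 : 0 ≤ (m₁ + m₃ + m₁') * t ^ 2 := by positivity
      linarith)
    (fun t => by
      have h1 : |(b t - a t).im| ≤ |(b t).im| + |(a t).im| := by
        rw [Complex.sub_im]; exact abs_sub _ _
      have h2 := ja t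
      have h3 := jb t
      have h4 : 0 ≤ (m₂ + m₃ + m₂') * |t| := by positivity
      linarith)
    (fun t => by
      have h2 := ka t
      have h4 : 0 ≤ (m₁ + m₂ + m₁' + m₂') * |t| ^ 3 := by positivity
      linarith)
  obtain ⟨c₀, hc₀, hlow⟩ := exists_lower_bound hJ ca na hdec (half_pos hv) hlim
  obtain ⟨N₁, hN₁⟩ := Filter.eventually_atTop.1 hlow
  obtain ⟨N₂, hN₂⟩ := exists_nat_ge B
  obtain ⟨N₃, hN₃⟩ := exists_nat_ge (2 * (C₁ / c₀))
  refine ⟨D + 2 * (C₁ / c₀) + 1, by positivity, max 8 (max N₁ (max N₂ N₃)), fun N hN => ?_⟩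
  simp only [max_le_iff] at hN
  obtain ⟨hN8, hNN₁, hNN₂, hNN₃⟩ := hN
  have hN2 : 2 ≤ N := by omega
  have hNpos : 0 < N := by omega
  have hN0 : (0 : ℝ) < N := by exact_mod_cast hNpos
  have hN2' : (2 : ℝ) ≤ N := by exact_mod_cast hN2
  have hBN : B ≤ N := hN₂.trans (by exact_mod_cast hNN₂)
  have hCN : 2 * (C₁ / c₀) ≤ N := hN₃.trans (by exact_mod_cast hNN₃)
  have hs : 0 < √(N : ℝ) := Real.sqrt_pos.2 hN0
  have epow : ∀ t, a t * a t ^ (N - 1) = a t ^ N := fun t => by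
    rw [← pow_succ']; congr 1; omega
  -- Fourier inversion for both densities
  have gP0 := density_at_zero_two hW hU σ₀ (σP N) A hNpos (hgPcont N)
    (gibbsMean_add_of_max hW hU (by linarith) (hmax N hN2)) (hgP N hN2)
    (integrable_mul_pow hJ ca cb na nb hdec hN8)
  have g0 := density_at_zero_two hU hU σ₀ σ₀ A hNpos (hgcont N)
    (by rw [hA]; ring) (by simpa only [ite_self] using hg N hN2)
    (integrable_mul_pow hJ ca ca na na hdec hN8)
  rw [← hadef] at gP0 g0
  rw [← hbdef] at gP0
  simp only [epow, div_self (hU.Z_pos σ₀).ne', one_pow, mul_one, sub_self, zero_mul, Real.exp_zero,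
    one_mul] at g0
  set H := (∫ t, a t ^ N).re with hH
  set R := (∫ t, b t * a t ^ (N - 1)).re with hR
  have hHlow : c₀ / √N ≤ H := hN₁ N hNN₁
  have hH0 : 0 < H := lt_of_lt_of_le (by positivity) hHlow
  have hRH : |R / H - 1| ≤ C₁ / c₀ / N := by
    rw [show R / H - 1 = (R - H) / H by field_simp, abs_div, abs_of_pos hH0, div_le_iff₀ hH0]
    calc |R - H| ≤ C₁ / N / √N := hrep N hN8
      _ = C₁ / c₀ / N * (c₀ / √N) := by field_simp
      _ ≤ C₁ / c₀ / N * H := by gcongr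
  have hhalf : C₁ / c₀ / N ≤ 1 / 2 := by
    rw [div_le_iff₀ hN0]; linarith
  have hlogRH := abs_log_le hhalf hRH
  have hRH0 : 0 < R / H := by
    have := (abs_le.1 (hRH.trans hhalf)).1
    linarith
  have hR0 : 0 < R := (div_pos_iff_of_pos_right hH0).1 hRH0
  have zW₀ := hW.Z_pos σ₀
  have zW := hW.Z_pos (σP N)
  have zU₀ := hU.Z_pos σ₀
  have zU := hU.Z_pos (σP N)
  have hE := hlogE N (σP N) (by linarith) hBN (tilt_bound hW hU hK hN2' hA (hmax N hN2))
  simp only [logZ] at hE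
  set x₁ := ∫ y, rexp (σ₀ * y - (ψ y + P y))
  set y₁ := ∫ y, rexp (σP N * y - (ψ y + P y))
  set x₂ := ∫ y, rexp (σ₀ * y - ψ y)
  set y₂ := ∫ y, rexp (σP N * y - ψ y)
  set E := rexp ((σP N - σ₀) * (N * A)) * (x₁ / y₁ * (x₂ / y₂) ^ (N - 1)) with hEdef
  have hE0 : 0 < E := by positivity
  have elogE : Real.log E = (σP N - σ₀) * (N * A) + ((Real.log x₁ - Real.log y₁) +
      ((N : ℝ) - 1) * (Real.log x₂ - Real.log y₂)) := by
    rw [hEdef, Real.log_mul (exp_pos _).ne' (by positivity), Real.log_exp,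
      Real.log_mul (by positivity) (by positivity), Real.log_pow,
      Real.log_div zW₀.ne' zW.ne', Real.log_div zU₀.ne' zU.ne', Nat.cast_sub (by omega : 1 ≤ N),
      Nat.cast_one]
  rw [← elogE] at hE
  -- `max (G 0) 0` is positive, hence equal to `G 0`
  have posmax : ∀ {u w : ℝ}, max u 0 = w → 0 < w → u = w := fun {u w} h hw => by
    rcases max_choice u 0 with h' | h' <;> linarith
  have gP1 := posmax gP0 (by positivity)
  have g1 := posmax g0 (by positivity)
  have eratio : gP N 0 / g N 0 = E * (R / H) := by
    rw [gP1, g1]; field_simp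
  rw [eratio, Real.log_mul hE0.ne' hRH0.ne']
  calc |Real.log E + Real.log (R / H)| ≤ |Real.log E| + |Real.log (R / H)| := abs_add_le _ _
    _ ≤ D / N + 2 * (C₁ / c₀ / N) := add_le_add hE hlogRH
    _ = (D + 2 * (C₁ / c₀)) / N := by ring
    _ ≤ (D + 2 * (C₁ / c₀) + 1) / N := div_le_div_of_nonneg_right (by linarith) hN0.le
end
end

section
/- There is a constant C > 0, depending only on κ₁ and κ₂, such that for all A, y ∈ ℝ and all integers N ≥ 2, |E_N^cg(A,y) − W'(A)·(A − y)| ≤ C·(A − y)²/(N − 1); in particular E_N^cg(A,y) converges to E^cg(A,y) = W'(A)·(A − y) as N → ∞. -/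
/-!
Write `Λ σ = log ∫ exp (-ψ y + σ y) dy`, so that `W ψ` is the Legendre transform of `Λ`.

Completing the square, `ψ y = κ₂ y² / 2 - φ y` with `φ` convex, and the substitution
`y = z + σ / κ₂` gives `Λ σ = σ² / (2 κ₂) + log ∫ exp (-κ₂ z² / 2 + φ (z + σ / κ₂)) dz`.
The last term is a log-integral of exponentials of functions convex in `σ`, hence convex
(Hölder): `Λ` is strongly convex with modulus `1 / κ₂` (`convexOn_logMGF_sub`).

Hence the supremum defining `W ψ A` is attained at some `s`, and `Λ` lies above the parabola
`Λ s + A (σ - s) + (σ - s)² / (4 κ₂)`. Dually,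
`0 ≤ W ψ B - W ψ A - s (B - A) ≤ κ₂ (B - A)²` for all `B` (`exists_W_bounds`),
which forces `deriv (W ψ) A = s`. The lower bound summed over the bonds bounds the energy of every
configuration below by `deriv (W ψ) A * (A - y)`; the upper bound, for the configuration with
uniform strain `A + (A - y) / (N - 1)`, gives the matching estimate with `C = κ₂`.
-/

noncomputable section

open MeasureTheory Real Filter

/-- The Cauchy–Born strain energy `W(A)`. -/
def W (ψ : ℝ → ℝ) (A : ℝ) : ℝ :=
  ⨆ σ : ℝ, (σ * A - Real.log (∫ y : ℝ, Real.exp (-ψ y + σ * y)))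

/-- The finite-domain coarse-grained energy
`E_N^cg(A,y) = inf { ∑_{i=2}^N [Wf(u_i - u_{i-1}) - Wf(A)] : u₁ = y, u_N = N A }`. -/
def EcgN (Wf : ℝ → ℝ) (N : ℕ) (A y : ℝ) : ℝ :=
  sInf { E : ℝ | ∃ u : ℕ → ℝ, u 1 = y ∧ u N = N * A ∧
    E = ∑ i ∈ Finset.Icc 2 N, (Wf (u i - u (i - 1)) - Wf A) }

/-- Hölder's inequality in logarithmic form: the log-integral of `exp ∘ g σ` is convex in `σ` when
`g` is. It is obtained from the convexity of `exp` after normalizing the integrals to `1`. -/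
lemma convexOn_log_integral_exp (g : ℝ → ℝ → ℝ) (hg : ∀ z, ConvexOn ℝ Set.univ (fun σ => g σ z))
    (hi : ∀ σ, Integrable (fun z => exp (g σ z))) :
    ConvexOn ℝ Set.univ (fun σ => log (∫ z, exp (g σ z))) := by
  have hpos : ∀ σ, 0 < ∫ z, exp (g σ z) := fun σ => integral_exp_pos (hi σ)
  have hn : ∀ σ, ∀ z, exp (g σ z - log (∫ z, exp (g σ z)))
      = exp (g σ z) * (∫ z, exp (g σ z))⁻¹ := by
    intro σ z
    rw [exp_sub, exp_log (hpos σ), div_eq_mul_inv]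
  refine ⟨convex_univ, ?_⟩
  intro s _ t _ a b ha hb hab
  simp only [smul_eq_mul]
  set r := a * s + b * t with hr
  set L := a * log (∫ z, exp (g s z)) + b * log (∫ z, exp (g t z)) with hL
  have key : ∫ z, exp (g r z) * exp (-L) ≤
      ∫ z, (a * (exp (g s z) * (∫ z, exp (g s z))⁻¹)
        + b * (exp (g t z) * (∫ z, exp (g t z))⁻¹)) := by
    refine integral_mono ((hi r).mul_const _)
      ((((hi s).mul_const _).const_mul a).add (((hi t).mul_const _).const_mul b)) ?_
    intro z
    simp only
    rw [← hn, ← hn, ← exp_add]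
    have h1 := (hg z).2 (Set.mem_univ s) (Set.mem_univ t) ha hb hab
    have h2 := convexOn_exp.2 (Set.mem_univ (g s z - log (∫ z, exp (g s z))))
      (Set.mem_univ (g t z - log (∫ z, exp (g t z)))) ha hb hab
    simp only [smul_eq_mul] at h1 h2
    refine le_trans (exp_le_exp.2 ?_) h2
    rw [hL]
    linarith
  rw [integral_add (((hi s).mul_const _).const_mul a) (((hi t).mul_const _).const_mul b),
    integral_const_mul, integral_const_mul, integral_mul_const, integral_mul_const,
    integral_mul_const, mul_inv_cancel₀ (hpos s).ne', mul_inv_cancel₀ (hpos t).ne', mul_one,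
    mul_one, hab, exp_neg, ← div_eq_mul_inv, div_le_one (exp_pos _)] at key
  exact (log_le_iff_le_exp (hpos r)).2 key

lemma contDiff_two_hasDerivAt {ψ : ℝ → ℝ} (hψ : ContDiff ℝ 2 ψ) (x : ℝ) :
    HasDerivAt ψ (deriv ψ x) x ∧ HasDerivAt (deriv ψ) (deriv (deriv ψ) x) x := by
  have h : ContDiff ℝ (1 + 1) ψ := by simpa [one_add_one_eq_two] using hψ
  have h2 := (contDiff_succ_iff_deriv.1 h)
  exact ⟨(h2.1 x).hasDerivAt, ((h2.2.2.differentiable one_ne_zero) x).hasDerivAt⟩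

lemma convexOn_sub_sq {ψ : ℝ → ℝ} {k : ℝ} (hψ : ContDiff ℝ 2 ψ)
    (hk : ∀ y, k ≤ deriv (deriv ψ) y) :
    ConvexOn ℝ Set.univ (fun y => ψ y - k / 2 * y ^ 2) := by
  refine convexOn_of_hasDerivWithinAt2_nonneg (f' := fun y => deriv ψ y - k * y)
    (f'' := fun y => deriv (deriv ψ) y - k) convex_univ ?_ ?_ ?_ ?_
  · have := hψ.continuous
    fun_prop
  · intro x _
    have := (contDiff_two_hasDerivAt hψ x).1.sub (((hasDerivAt_id x).pow 2).const_mul (k / 2))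
    refine (this.congr_deriv ?_).hasDerivWithinAt
    simp
    ring
  · intro x _
    have := (contDiff_two_hasDerivAt hψ x).2.sub ((hasDerivAt_id x).const_mul k)
    refine (this.congr_deriv ?_).hasDerivWithinAt
    simp
  · intro x _
    linarith [hk x]

lemma integrable_exp_tilt_s10 {ψ : ℝ → ℝ} {k : ℝ} (hk0 : 0 < k) (hψ : ContDiff ℝ 2 ψ)
    (hk : ∀ y, k ≤ deriv (deriv ψ) y) (σ : ℝ) :
    Integrable (fun y => exp (-ψ y + σ * y)) := by
  have hc := convexOn_sub_sq hψ hk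
  -- the tangent line at `0` of the convex function `ψ - k y² / 2`
  have hd : HasDerivAt (fun y => ψ y - k / 2 * y ^ 2) (deriv ψ 0) 0 := by
    have := (contDiff_two_hasDerivAt hψ 0).1.sub (((hasDerivAt_id (0 : ℝ)).pow 2).const_mul (k / 2))
    refine this.congr_deriv ?_
    simp
  have htan : ∀ y, ψ 0 + deriv ψ 0 * y ≤ ψ y - k / 2 * y ^ 2 := by
    intro y
    rcases lt_trichotomy y 0 with h | h | h
    · have := hc.slope_le_of_hasDerivAt (Set.mem_univ y) (Set.mem_univ 0) h hd
      rw [slope_def_field, div_le_iff₀ (by linarith)] at this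
      norm_num at this
      linarith
    · subst h; simp
    · have := hc.le_slope_of_hasDerivAt (Set.mem_univ 0) (Set.mem_univ y) h hd
      rw [slope_def_field, le_div_iff₀ (by linarith)] at this
      norm_num at this
      linarith
  refine (((integrable_exp_neg_mul_sq (b := k / 4) (by positivity)).const_mul
    (exp (-ψ 0 + (σ - deriv ψ 0) ^ 2 / k)))).mono' ?_ ?_
  · have := hψ.continuous
    exact (by fun_prop : Continuous fun y => exp (-ψ y + σ * y)).aestronglyMeasurable
  · refine Eventually.of_forall fun y => ?_
    rw [norm_of_nonneg (exp_pos _).le, ← exp_add, exp_le_exp]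
    have h1 := htan y
    have h2 : (σ - deriv ψ 0) * y ≤ (σ - deriv ψ 0) ^ 2 / k + k / 4 * y ^ 2 := by
      have : 0 ≤ ((σ - deriv ψ 0) - k / 2 * y) ^ 2 / k := by positivity
      have e : ((σ - deriv ψ 0) - k / 2 * y) ^ 2 / k
          = (σ - deriv ψ 0) ^ 2 / k + k / 4 * y ^ 2 - (σ - deriv ψ 0) * y := by
        field_simp; ring
      linarith
    linarith

/-- The logarithmic moment generating function `Λ σ = log ∫ exp (-ψ y + σ y) dy`, whose Legendre
transform is `W ψ`. -/
def logMGF (ψ : ℝ → ℝ) (σ : ℝ) : ℝ := log (∫ y : ℝ, exp (-ψ y + σ * y))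

/-- Strong convexity of `Λ`, from the upper bound on `ψ''`. -/
lemma convexOn_logMGF_sub {ψ : ℝ → ℝ} {κ₁ κ₂ : ℝ} (hκ₁ : 0 < κ₁) (hκ₂ : 0 < κ₂)
    (hψ : ContDiff ℝ 2 ψ)
    (hb : ∀ y : ℝ, κ₁ ≤ deriv (deriv ψ) y ∧ deriv (deriv ψ) y ≤ κ₂) :
    ConvexOn ℝ Set.univ (fun σ => logMGF ψ σ - σ ^ 2 / (2 * κ₂)) := by
  have hφ : ConvexOn ℝ Set.univ (fun y => κ₂ / 2 * y ^ 2 - ψ y) := by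
    have h := convexOn_sub_sq (ψ := fun y => -ψ y) (k := -κ₂) hψ.neg (by
      intro y
      have : deriv (fun y => -ψ y) = fun y => -deriv ψ y := by
        funext z; exact deriv.fun_neg
      rw [this, deriv.fun_neg]
      linarith [(hb y).2])
    convert h using 2
    ring
  have hint := integrable_exp_tilt_s10 hκ₁ hψ (fun y => (hb y).1)
  -- the exponent after the substitution `y = z + σ / κ₂`
  set g : ℝ → ℝ → ℝ := fun σ z =>
    -(κ₂ / 2 * z ^ 2) + (κ₂ / 2 * (z + σ / κ₂) ^ 2 - ψ (z + σ / κ₂)) with hg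
  have hgeq : ∀ σ z, exp (g σ z)
      = exp (-ψ (z + σ / κ₂) + σ * (z + σ / κ₂)) * exp (-(σ ^ 2 / (2 * κ₂))) := by
    intro σ z
    rw [← exp_add]
    congr 1
    simp only [hg]
    field_simp
    ring
  have hgi : ∀ σ, Integrable (fun z => exp (g σ z)) := by
    intro σ
    simp_rw [hgeq]
    exact ((hint σ).comp_add_right (σ / κ₂)).mul_const _
  have hgc : ∀ z, ConvexOn ℝ Set.univ (fun σ => g σ z) := by
    intro z
    refine ⟨convex_univ, ?_⟩
    intro s _ t _ a b ha hb' hab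
    have h := hφ.2 (Set.mem_univ (z + s / κ₂)) (Set.mem_univ (z + t / κ₂)) ha hb' hab
    simp only [smul_eq_mul] at h
    have e : a * (z + s / κ₂) + b * (z + t / κ₂) = z + (a * s + b * t) / κ₂ := by
      linear_combination z * hab
    rw [e] at h
    simp only [hg, smul_eq_mul]
    have e2 : -(κ₂ / 2 * z ^ 2) = a * (-(κ₂ / 2 * z ^ 2)) + b * (-(κ₂ / 2 * z ^ 2)) := by
      linear_combination (κ₂ / 2 * z ^ 2) * hab
    linarith
  have hmain := convexOn_log_integral_exp g hgc hgi
  convert hmain using 2 with σ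
  simp_rw [hgeq]
  rw [integral_mul_const,
    integral_add_right_eq_self (fun y => exp (-ψ y + σ * y)) (σ / κ₂),
    log_mul (integral_exp_pos (hint σ)).ne' (exp_pos _).ne', log_exp, logMGF]
  ring

/-- A strongly convex function on `ℝ`, tilted by a linear term, attains its minimum. -/
lemma exists_min_of_strongly_convex {F : ℝ → ℝ} {c : ℝ} (hc : 0 < c)
    (hF : ConvexOn ℝ Set.univ (fun σ => F σ - c * σ ^ 2)) (A : ℝ) :
    ∃ s, ∀ σ, F s - s * A ≤ F σ - σ * A := by
  have hcont : Continuous F := by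
    have h := (hF.continuousOn isOpen_univ)
    rw [← continuousOn_univ]
    have h2 : ContinuousOn (fun σ : ℝ => c * σ ^ 2) Set.univ := by fun_prop
    refine (h.add h2).congr ?_
    intro x _
    simp
  set G : ℝ → ℝ := fun σ => F σ - c * σ ^ 2 with hG
  -- outside `[-1, 1]` the convex function `G` lies above its chords through `0` and `±1`
  have hbd : ∀ σ, 1 ≤ |σ| → G 0 - (|G 1 - G 0| + |G (-1) - G 0|) * |σ| ≤ G σ := by
    intro σ hσ
    have habs : 0 < |σ| := by linarith
    have h1 := abs_nonneg (G 1 - G 0)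
    have h2 := abs_nonneg (G (-1) - G 0)
    have h3 := neg_abs_le (G 1 - G 0)
    have h4 := neg_abs_le (G (-1) - G 0)
    have hle : |σ|⁻¹ ≤ 1 := inv_le_one_of_one_le₀ hσ
    have h := hF.2 (Set.mem_univ 0) (Set.mem_univ σ) (sub_nonneg.2 hle)
      (inv_nonneg.2 habs.le) (by ring)
    simp only [smul_eq_mul, mul_zero, zero_add] at h
    change G (|σ|⁻¹ * σ) ≤ (1 - |σ|⁻¹) * G 0 + |σ|⁻¹ * G σ at h
    have h5 : |σ| * G (|σ|⁻¹ * σ) ≤ (|σ| - 1) * G 0 + G σ := by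
      have := mul_le_mul_of_nonneg_left h habs.le
      calc _ ≤ _ := this
        _ = _ := by field_simp
    rcases le_or_gt 0 σ with h0 | h0
    · rw [abs_of_nonneg h0] at *
      rw [inv_mul_cancel₀ habs.ne'] at h5
      nlinarith
    · rw [abs_of_neg h0] at *
      rw [show (-σ)⁻¹ * σ = -1 by rw [inv_neg, neg_mul, inv_mul_cancel₀ h0.ne]] at h5
      nlinarith
  set K := |G 1 - G 0| + |G (-1) - G 0| + |A| with hK
  have hlow : ∀ σ, 1 ≤ |σ| → G 0 + |σ| * (c * |σ| - K) ≤ F σ - σ * A := by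
    intro σ hσ
    have h1 := hbd σ hσ
    have h2 : σ * A ≤ |σ| * |A| := by rw [← abs_mul]; exact le_abs_self _
    have h3 : F σ = G σ + c * |σ| ^ 2 := by simp [hG]
    rw [h3, hK]
    nlinarith
  have hcf : Continuous (fun σ => F σ - σ * A) := by fun_prop
  refine hcf.exists_forall_le ?_
  have ht : Tendsto (fun σ : ℝ => |σ|) (cocompact ℝ) atTop := tendsto_norm_cocompact_atTop
  have ht2 : Tendsto (fun σ : ℝ => G 0 + |σ| * (c * |σ| - K)) (cocompact ℝ) atTop :=
    tendsto_atTop_add_const_left _ _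
      (ht.atTop_mul_atTop₀ (tendsto_atTop_add_const_right _ (-K) (ht.const_mul_atTop hc)))
  refine tendsto_atTop_mono' _ ?_ ht2
  filter_upwards [ht.eventually_ge_atTop 1] with σ hσ using hlow σ hσ

/-- The midpoint form of quadratic growth at a minimizer; comparing only with the midpoint costs a
factor `2` against the optimal constant `c`. -/
lemma quadratic_growth {F : ℝ → ℝ} {c : ℝ}
    (hF : ConvexOn ℝ Set.univ (fun σ => F σ - c * σ ^ 2)) {A s : ℝ}
    (hs : ∀ σ, F s - s * A ≤ F σ - σ * A) (σ : ℝ) :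
    F s + A * (σ - s) + c / 2 * (σ - s) ^ 2 ≤ F σ := by
  have h := hF.2 (Set.mem_univ s) (Set.mem_univ σ) (by norm_num : (0 : ℝ) ≤ 1 / 2)
    (by norm_num : (0 : ℝ) ≤ 1 / 2) (by norm_num)
  simp only [smul_eq_mul] at h
  have h2 := hs (1 / 2 * s + 1 / 2 * σ)
  nlinarith

/-- The maximizer `s` in the definition of `W ψ A` is a subgradient of `W ψ` at `A`, and `W ψ` lies
below a parabola of curvature `2 κ₂` touching it there. -/
lemma exists_W_bounds {ψ : ℝ → ℝ} {κ₁ κ₂ : ℝ} (hκ₁ : 0 < κ₁) (hκ₂ : 0 < κ₂)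
    (hψ : ContDiff ℝ 2 ψ)
    (hb : ∀ y : ℝ, κ₁ ≤ deriv (deriv ψ) y ∧ deriv (deriv ψ) y ≤ κ₂) (A : ℝ) :
    ∃ s, ∀ B, W ψ A + s * (B - A) ≤ W ψ B ∧
      W ψ B ≤ W ψ A + s * (B - A) + κ₂ * (B - A) ^ 2 := by
  have hconv : ConvexOn ℝ Set.univ (fun σ => logMGF ψ σ - 1 / (2 * κ₂) * σ ^ 2) := by
    convert convexOn_logMGF_sub hκ₁ hκ₂ hψ hb using 2
    ring
  obtain ⟨s, hs⟩ := exists_min_of_strongly_convex (by positivity) hconv A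
  have hgrow := quadratic_growth hconv hs
  have hW : ∀ B, W ψ B = ⨆ σ : ℝ, (σ * B - logMGF ψ σ) := fun B => rfl
  have hub : ∀ B σ, σ * B - logMGF ψ σ
      ≤ (s * A - logMGF ψ s) + s * (B - A) + κ₂ * (B - A) ^ 2 := by
    intro B σ
    have h1 := hgrow σ
    have h2 : 0 ≤ ((σ - s) - 2 * κ₂ * (B - A)) ^ 2 / (4 * κ₂) := by positivity
    have e : ((σ - s) - 2 * κ₂ * (B - A)) ^ 2 / (4 * κ₂)
        = 1 / (2 * κ₂) / 2 * (σ - s) ^ 2 - (σ - s) * (B - A) + κ₂ * (B - A) ^ 2 := by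
      field_simp; ring
    linarith
  have hbdd : ∀ B, BddAbove (Set.range fun σ : ℝ => σ * B - logMGF ψ σ) := by
    intro B
    exact ⟨_, Set.forall_mem_range.2 (hub B)⟩
  have hle : ∀ B, s * B - logMGF ψ s ≤ W ψ B := fun B => by
    rw [hW]; exact le_ciSup (hbdd B) s
  have hge : ∀ B, W ψ B ≤ (s * A - logMGF ψ s) + s * (B - A) + κ₂ * (B - A) ^ 2 := fun B => by
    rw [hW]; exact ciSup_le (hub B)
  have hA : W ψ A = s * A - logMGF ψ s := by
    refine le_antisymm ?_ (hle A)
    simpa using hge A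
  refine ⟨s, fun B => ⟨?_, ?_⟩⟩
  · rw [hA]; linarith [hle B]
  · rw [hA]; exact hge B

lemma deriv_eq_of_quadratic_bounds {f : ℝ → ℝ} {A s C : ℝ}
    (h : ∀ B, f A + s * (B - A) ≤ f B ∧ f B ≤ f A + s * (B - A) + C * (B - A) ^ 2) :
    deriv f A = s := by
  have hO : (fun B => f B - f A - s * (B - A)) =O[nhds A] fun B => ‖B - A‖ ^ 2 := by
    refine Asymptotics.IsBigO.of_bound C (Eventually.of_forall fun B => ?_)
    have h1 := (h B).1
    have h2 := (h B).2
    rw [norm_of_nonneg (by linarith), norm_of_nonneg (by positivity), norm_eq_abs, sq_abs]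
    linarith
  have hd := (hO.hasFDerivAt one_lt_two).hasDerivAt
  have hl : HasDerivAt (fun B => f A + s * (B - A)) s A := by
    simpa using (((hasDerivAt_id A).sub_const A).const_mul s).const_add (f A)
  have := (hd.add hl).deriv
  simp only [zero_add, zero_apply] at this
  rw [← this]
  congr 1
  funext B
  simp

lemma sum_Icc_two_telescope (u : ℕ → ℝ) (A : ℝ) {N : ℕ} (hN : 1 ≤ N) :
    ∑ i ∈ Finset.Icc 2 N, (u i - u (i - 1) - A) = u N - u 1 - ((N : ℝ) - 1) * A := by
  induction N, hN using Nat.le_induction with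
  | base => simp
  | succ n hn ih =>
    rw [Finset.sum_Icc_succ_top (by omega), ih]
    push_cast
    simp
    ring

/-- For any `f` lying between its tangent at `A` and a parabola touching it there, the `N`-site
energy is within `C (A - y)² / (N - 1)` of the tangent value. -/
lemma EcgN_bounds {f : ℝ → ℝ} {A s C : ℝ}
    (h : ∀ B, f A + s * (B - A) ≤ f B ∧ f B ≤ f A + s * (B - A) + C * (B - A) ^ 2)
    (y : ℝ) {N : ℕ} (hN : 2 ≤ N) :
    |EcgN f N A y - s * (A - y)| ≤ C * (A - y) ^ 2 / ((N : ℝ) - 1) := by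
  have hN2 : (2 : ℝ) ≤ N := by exact_mod_cast hN
  have hN' : (0 : ℝ) < (N : ℝ) - 1 := by linarith
  set S := { E : ℝ | ∃ u : ℕ → ℝ, u 1 = y ∧ u N = N * A ∧
    E = ∑ i ∈ Finset.Icc 2 N, (f (u i - u (i - 1)) - f A) } with hS
  have hlow : ∀ E ∈ S, s * (A - y) ≤ E := by
    rintro E ⟨u, h1, hu, rfl⟩
    calc s * (A - y) = ∑ i ∈ Finset.Icc 2 N, s * (u i - u (i - 1) - A) := by
          rw [← Finset.mul_sum, sum_Icc_two_telescope u A (by omega), h1, hu]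
          ring
      _ ≤ _ := Finset.sum_le_sum fun i _ => by linarith [(h (u i - u (i - 1))).1]
  -- the uniform strain compatible with the boundary conditions
  set d := A + (A - y) / ((N : ℝ) - 1) with hd
  have hmem : ((N : ℝ) - 1) * (f d - f A) ∈ S := by
    refine ⟨fun i => y + ((i : ℝ) - 1) * d, by simp, ?_, ?_⟩
    · simp only [hd]
      field_simp
      ring
    · have : ∀ i ∈ Finset.Icc 2 N,
          f (y + ((i : ℝ) - 1) * d - (y + (((i - 1 : ℕ) : ℝ) - 1) * d)) - f A = f d - f A := by
        intro i hi
        have hi2 := (Finset.mem_Icc.1 hi).1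
        rw [Nat.cast_sub (by omega)]
        congr 2
        push_cast
        ring
      rw [Finset.sum_congr rfl this, Finset.sum_const, Nat.card_Icc, nsmul_eq_mul,
        show N + 1 - 2 = N - 1 by omega, Nat.cast_sub (by omega)]
      simp
  have hE : EcgN f N A y = sInf S := rfl
  have h1 : s * (A - y) ≤ EcgN f N A y := by
    rw [hE]; exact le_csInf ⟨_, hmem⟩ hlow
  have h2 : EcgN f N A y ≤ ((N : ℝ) - 1) * (f d - f A) := by
    rw [hE]; exact csInf_le ⟨_, hlow⟩ hmem
  have h3 : ((N : ℝ) - 1) * (f d - f A) ≤ s * (A - y) + C * (A - y) ^ 2 / ((N : ℝ) - 1) := by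
    have h4 : f d - f A ≤ s * (d - A) + C * (d - A) ^ 2 := by linarith [(h d).2]
    have h5 : d - A = (A - y) / ((N : ℝ) - 1) := by rw [hd]; ring
    calc _ ≤ ((N : ℝ) - 1) * (s * (d - A) + C * (d - A) ^ 2) :=
          mul_le_mul_of_nonneg_left h4 hN'.le
      _ = _ := by rw [h5]; field_simp
  rw [abs_of_nonneg (by linarith)]
  linarith

/-- `|E_N^cg(A,y) - W'(A)(A-y)| ≤ C (A-y)²/(N-1)` with `C`
depending only on `κ₁, κ₂`; in particular `E_N^cg(A,y) → W'(A)(A-y)`. -/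
theorem coarse_grained_energy_limit_no_forces
    (κ₁ κ₂ : ℝ) (hκ₁ : 0 < κ₁) (hκ : κ₁ ≤ κ₂) :
    ∃ C > 0, ∀ ψ : ℝ → ℝ, ContDiff ℝ 2 ψ →
      (∀ y : ℝ, κ₁ ≤ deriv (deriv ψ) y ∧ deriv (deriv ψ) y ≤ κ₂) →
      (∀ (A y : ℝ) (N : ℕ), 2 ≤ N →
        |EcgN (W ψ) N A y - deriv (W ψ) A * (A - y)| ≤ C * (A - y) ^ 2 / ((N : ℝ) - 1)) ∧
      (∀ A y : ℝ,
        Tendsto (fun N : ℕ => EcgN (W ψ) N A y) atTop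
          (nhds (deriv (W ψ) A * (A - y)))) := by
  have hκ₂ : 0 < κ₂ := lt_of_lt_of_le hκ₁ hκ
  refine ⟨κ₂, hκ₂, fun ψ hψ hb => ?_⟩
  have main : ∀ (A y : ℝ) (N : ℕ), 2 ≤ N →
      |EcgN (W ψ) N A y - deriv (W ψ) A * (A - y)| ≤ κ₂ * (A - y) ^ 2 / ((N : ℝ) - 1) := by
    intro A y N hN
    obtain ⟨s, hs⟩ := exists_W_bounds hκ₁ hκ₂ hψ hb A
    rw [deriv_eq_of_quadratic_bounds hs]
    exact EcgN_bounds hs y hN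
  refine ⟨main, fun A y => ?_⟩
  rw [tendsto_iff_dist_tendsto_zero]
  have hlim : Tendsto (fun N : ℕ => κ₂ * (A - y) ^ 2 / ((N : ℝ) - 1)) atTop (nhds 0) :=
    Tendsto.const_div_atTop
      (tendsto_atTop_add_const_right _ (-1) tendsto_natCast_atTop_atTop) _
  refine squeeze_zero' (Eventually.of_forall fun _ => dist_nonneg) ?_ hlim
  filter_upwards [eventually_ge_atTop 2] with N hN
  rw [Real.dist_eq]
  exact main A y N hN
end
end
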